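/- arXiv:2412.00764 — 9 statements merged into one kernel-verified Lean document; each statement's English description precedes it below -/
import Mathlib

section
/- For every z > 0 and every real polynomial p, the truncated Freud linear functional u satisfies the distributional Pearson equation D((x²−z²)u) + (4x³(x²−z²)−2x)u = 0; explicitly, ∫_{−z}^{z} [ −(x²−z²)·p′(x) + (4x³(x²−z²) − 2x)·p(x) ] e^{−x⁴} dx = 0. -/
/-- For every `z > 0` and every real polynomial `p`, the truncated Freud linear
functional `u`, `⟨u, p⟩ = ∫_{-z}^{z} p(x) e^{-x⁴} dx`, satisfies the distributional
Pearson equation `D((x²-z²)u) + (4x³(x²-z²)-2x)u = 0`. -/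
theorem truncated_freud_pearson_equation (z : ℝ) (hz : 0 < z) (p : Polynomial ℝ) :
    ∫ x in (-z)..z,
      (-(x ^ 2 - z ^ 2) * (Polynomial.derivative p).eval x
        + (4 * x ^ 3 * (x ^ 2 - z ^ 2) - 2 * x) * p.eval x) * Real.exp (-x ^ 4) = 0 := by
  have hd : ∀ x ∈ Set.uIcc (-z) z,
      HasDerivAt (fun x : ℝ => -(x ^ 2 - z ^ 2) * p.eval x * Real.exp (-x ^ 4))
        ((-(x ^ 2 - z ^ 2) * (Polynomial.derivative p).eval x
        + (4 * x ^ 3 * (x ^ 2 - z ^ 2) - 2 * x) * p.eval x) * Real.exp (-x ^ 4)) x := by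
    intro x _
    have h1 : HasDerivAt (fun x : ℝ => -(x ^ 2 - z ^ 2)) (-(2 * x)) x := by
      exact ((hasDerivAt_pow 2 x).sub_const (z ^ 2)).neg.congr_deriv (by simp)
    have h2 : HasDerivAt (fun x : ℝ => Real.exp (-x ^ 4))
        (Real.exp (-x ^ 4) * (-(4 * x ^ 3))) x := by
      simpa using (hasDerivAt_pow 4 x).neg.exp
    exact ((h1.mul (p.hasDerivAt x)).mul h2).congr_deriv (by simp only [Pi.mul_apply]; ring)
  rw [intervalIntegral.integral_eq_sub_of_hasDerivAt hd]
  · simp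
  · apply Continuous.intervalIntegrable
    fun_prop
end

section
/- For every z > 0 and every n ≥ 0, the even moments u_{2n}(z) = ∫_{−z}^{z} x^{2n} e^{−x⁴} dx satisfy 4·u_{2n+4} = (2n+1)·u_{2n} − 2·z^{2n+1}·e^{−z⁴}. -/
/-- For every `z > 0` and `n ≥ 0`, the even moments
`u_{2n}(z) = ∫_{-z}^{z} x^{2n} e^{-x⁴} dx` satisfy
`4·u_{2n+4} = (2n+1)·u_{2n} - 2·z^{2n+1}·e^{-z⁴}`. -/
theorem truncated_freud_moment_relation (z : ℝ) (hz : 0 < z) (n : ℕ) :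
    4 * (∫ x in (-z)..z, x ^ (2 * n + 4) * Real.exp (-x ^ 4)) =
      (2 * (n : ℝ) + 1) * (∫ x in (-z)..z, x ^ (2 * n) * Real.exp (-x ^ 4))
        - 2 * z ^ (2 * n + 1) * Real.exp (-z ^ 4) := by
  have hd : ∀ x ∈ Set.uIcc (-z) z,
      HasDerivAt (fun x : ℝ => x ^ (2 * n + 1) * Real.exp (-x ^ 4))
        ((2 * (n : ℝ) + 1) * (x ^ (2 * n) * Real.exp (-x ^ 4))
          - 4 * (x ^ (2 * n + 4) * Real.exp (-x ^ 4))) x := by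
    intro x _
    have h1 : HasDerivAt (fun x : ℝ => x ^ (2 * n + 1))
        (((2 * n + 1 : ℕ) : ℝ) * x ^ (2 * n)) x := by
      simpa using hasDerivAt_pow (2 * n + 1) x
    have h2 : HasDerivAt (fun x : ℝ => Real.exp (-x ^ 4))
        (Real.exp (-x ^ 4) * (-(4 * x ^ 3))) x := by
      have h3 : HasDerivAt (fun x : ℝ => x ^ 4) (4 * x ^ 3) x := by
        simpa using hasDerivAt_pow 4 x
      exact h3.fun_neg.exp
    refine (h1.fun_mul h2).congr_deriv ?_
    push_cast
    ring
  have i1 : IntervalIntegrable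
      (fun x : ℝ => (2 * (n : ℝ) + 1) * (x ^ (2 * n) * Real.exp (-x ^ 4)))
      MeasureTheory.volume (-z) z :=
    Continuous.intervalIntegrable (by fun_prop) _ _
  have i2 : IntervalIntegrable
      (fun x : ℝ => 4 * (x ^ (2 * n + 4) * Real.exp (-x ^ 4)))
      MeasureTheory.volume (-z) z :=
    Continuous.intervalIntegrable (by fun_prop) _ _
  have key := intervalIntegral.integral_eq_sub_of_hasDerivAt hd (i1.sub i2)
  rw [intervalIntegral.integral_sub i1 i2, intervalIntegral.integral_const_mul,
    intervalIntegral.integral_const_mul] at key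
  have e1 : (-z) ^ (2 * n + 1) = -z ^ (2 * n + 1) := Odd.neg_pow ⟨n, rfl⟩ z
  have e2 : (-z) ^ 4 = z ^ 4 := by ring
  rw [e1, e2] at key
  linarith
end

section
/- For every z > 0 and every n ≥ 0, the even moments u_{2n}(z) = ∫_{−z}^{z} x^{2n} e^{−x⁴} dx satisfy the four-term recurrence relation 4·u_{2n+6} − 4z²·u_{2n+4} − (2n+3)·u_{2n+2} + (2n+1)·z²·u_{2n} = 0. -/
/-- For every `z > 0` and `n ≥ 0`, the even moments
`u_{2n}(z) = ∫_{-z}^{z} x^{2n} e^{-x⁴} dx` satisfy the four-term recurrence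
`4·u_{2n+6} - 4z²·u_{2n+4} - (2n+3)·u_{2n+2} + (2n+1)·z²·u_{2n} = 0`. -/
theorem truncated_freud_moment_recurrence (z : ℝ) (hz : 0 < z) (n : ℕ) :
    4 * (∫ x in (-z)..z, x ^ (2 * n + 6) * Real.exp (-x ^ 4))
      - 4 * z ^ 2 * (∫ x in (-z)..z, x ^ (2 * n + 4) * Real.exp (-x ^ 4))
      - (2 * (n : ℝ) + 3) * (∫ x in (-z)..z, x ^ (2 * n + 2) * Real.exp (-x ^ 4))
      + (2 * (n : ℝ) + 1) * z ^ 2 * (∫ x in (-z)..z, x ^ (2 * n) * Real.exp (-x ^ 4)) = 0 := by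
  have hint : ∀ k : ℕ, IntervalIntegrable (fun x : ℝ => x ^ k * Real.exp (-x ^ 4))
      MeasureTheory.volume (-z) z := fun k =>
    Continuous.intervalIntegrable (by fun_prop) _ _
  have hderiv : ∀ x ∈ Set.uIcc (-z) z,
      HasDerivAt (fun x : ℝ => x ^ (2 * n + 1) * (z ^ 2 - x ^ 2) * Real.exp (-x ^ 4))
        (4 * (x ^ (2 * n + 6) * Real.exp (-x ^ 4))
          - 4 * z ^ 2 * (x ^ (2 * n + 4) * Real.exp (-x ^ 4))
          - (2 * (n : ℝ) + 3) * (x ^ (2 * n + 2) * Real.exp (-x ^ 4))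
          + (2 * (n : ℝ) + 1) * z ^ 2 * (x ^ (2 * n) * Real.exp (-x ^ 4))) x := by
    intro x _
    have h1 := hasDerivAt_pow (2 * n + 1) x
    have h2 := (hasDerivAt_pow 2 x).const_sub (z ^ 2)
    have h3 := (hasDerivAt_pow 4 x).neg.exp
    refine ((h1.mul h2).mul h3).congr_deriv ?_
    simp only [Pi.mul_apply, Pi.neg_apply, Nat.add_sub_cancel]
    push_cast
    ring
  have key := intervalIntegral.integral_eq_sub_of_hasDerivAt hderiv
    (Continuous.intervalIntegrable (by fun_prop) _ _)
  rw [intervalIntegral.integral_add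
      ((((hint _).const_mul _).sub ((hint _).const_mul _)).sub ((hint _).const_mul _))
      ((hint _).const_mul _),
    intervalIntegral.integral_sub
      (((hint _).const_mul _).sub ((hint _).const_mul _)) ((hint _).const_mul _),
    intervalIntegral.integral_sub ((hint _).const_mul _) ((hint _).const_mul _)] at key
  simp only [intervalIntegral.integral_const_mul] at key
  rw [key]
  ring
end

section
/- For every z > 0, the recurrence coefficients γ_n = γ_n(z) of the monic orthogonal polynomials for the weight e^{−x⁴} on [−z, z] satisfy, for all n ≥ 2, the Laguerre–Freud equation z²/4 = γ_n·[ γ_{n−1}·(γ_{n−2} + γ_{n−1} + γ_n − z²) + γ_n·(γ_{n+1} + γ_n + γ_{n−1} − z²) + 1/4 − n/2 ] − γ_{n+1}·[ γ_{n+2}·(γ_{n+3} + γ_{n+2} + γ_{n+1} − z²) + γ_{n+1}·(γ_{n+2} + γ_{n+1} + γ_n − z²) − n/2 − 3/4 ]. -/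
open Polynomial in
/-- The moment functional of the truncated Freud weight, as a linear map. -/
theorem tf_functional (z : ℝ) : ∃ L : ℝ[X] →ₗ[ℝ] ℝ,
    (∀ q : ℝ[X], L q = ∫ x in (-z)..z, q.eval x * Real.exp (-x ^ 4)) ∧
    (∀ q : ℝ[X], L (C 2 * X * q + (X ^ 2 - C (z ^ 2)) * derivative q
      - C 4 * X ^ 3 * (X ^ 2 - C (z ^ 2)) * q) = 0) := by
  have hint : ∀ q : ℝ[X], IntervalIntegrable (fun x => q.eval x * Real.exp (-x ^ 4))
      MeasureTheory.volume (-z) z := by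
    intro q
    apply Continuous.intervalIntegrable
    have := q.continuous
    fun_prop
  refine ⟨{ toFun := fun q => ∫ x in (-z)..z, q.eval x * Real.exp (-x ^ 4)
            map_add' := ?_
            map_smul' := ?_ }, fun q => rfl, ?_⟩
  · intro p q
    rw [← intervalIntegral.integral_add (hint p) (hint q)]
    congr 1
    ext x
    simp [add_mul]
  · intro c q
    simp only [RingHom.id_apply, smul_eq_mul]
    rw [← intervalIntegral.integral_const_mul]
    congr 1
    ext x
    simp [mul_assoc]
  · intro q
    change (∫ x in (-z)..z, _ * Real.exp (-x ^ 4)) = 0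
    rw [intervalIntegral.integral_eq_sub_of_hasDerivAt
      (f := fun x => (x ^ 2 - z ^ 2) * q.eval x * Real.exp (-x ^ 4)) _ (hint _)]
    · simp
    · intro x _
      have h1 : HasDerivAt (fun x : ℝ => x ^ 2 - z ^ 2) (2 * x) x := by
        simpa using (hasDerivAt_pow 2 x).sub_const (z ^ 2)
      have h2 : HasDerivAt (fun x : ℝ => Real.exp (-x ^ 4))
          (Real.exp (-x ^ 4) * (-(4 * x ^ 3))) x := by
        simpa using (hasDerivAt_pow 4 x).fun_neg.exp
      have h3 := (h1.fun_mul (q.hasDerivAt x)).fun_mul h2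
      refine h3.congr_deriv ?_
      simp only [eval_sub, eval_add, eval_mul, eval_pow, eval_C, eval_X]
      ring

open Polynomial in
theorem tf_orth (L : ℝ[X] →ₗ[ℝ] ℝ) (P : ℕ → ℝ[X]) (h : ℕ → ℝ)
    (hmonic : ∀ n, (P n).Monic) (hdeg : ∀ n, (P n).natDegree = n)
    (horth : ∀ m n, m ≠ n → L (P m * P n) = 0)
    (hh : ∀ n, L (P n * P n) = h n) (m : ℕ) (q : ℝ[X]) (c : ℝ)
    (hc : q.coeff m = c) (hq : ∀ k, m < k → q.coeff k = 0) :
    L (P m * q) = c * h m := by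
  have hlead : ∀ d, (P d).coeff d = 1 := fun d => by
    have := hmonic d
    rwa [Monic, leadingCoeff, hdeg] at this
  have hhigh : ∀ d k, d < k → (P d).coeff k = 0 := fun d k hk =>
    coeff_eq_zero_of_natDegree_lt (by rw [hdeg]; exact hk)
  have key : ∀ d, d ≤ m → ∀ q : ℝ[X], (∀ k, d ≤ k → q.coeff k = 0) → L (P m * q) = 0 := by
    intro d
    induction d with
    | zero =>
      intro _ q hq
      have : q = 0 := by ext k; simp [hq k]
      simp [this]
    | succ d ih =>
      intro hd q hq
      have h1 := ih (by omega) (q - C (q.coeff d) * P d) (by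
        intro k hk
        rw [coeff_sub, coeff_C_mul]
        rcases hk.eq_or_lt with rfl | hk
        · simp [hlead]
        · simp [hhigh _ _ hk, hq k hk])
      have h2 : P m * q = P m * (q - C (q.coeff d) * P d) + q.coeff d • (P m * P d) := by
        rw [smul_eq_C_mul]; ring
      rw [h2, map_add, map_smul, h1, horth m d (by omega)]
      simp
  have h1 := key m le_rfl (q - C c * P m) (by
    intro k hk
    rw [coeff_sub, coeff_C_mul]
    rcases hk.eq_or_lt with rfl | hk
    · simp [hlead, hc]
    · simp [hhigh _ _ hk, hq k hk])
  have h2 : P m * q = P m * (q - C c * P m) + c • (P m * P m) := by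
    rw [smul_eq_C_mul]; ring
  rw [h2, map_add, map_smul, h1, hh]
  simp

open Polynomial in
/-- Moments of orders one, three, five, two against neighbouring polynomials. -/
theorem tf_moments (L : ℝ[X] →ₗ[ℝ] ℝ) (P : ℕ → ℝ[X]) (γ h : ℕ → ℝ)
    (horth : ∀ m n, m ≠ n → L (P m * P n) = 0)
    (hh : ∀ n, L (P n * P n) = h n)
    (hP0 : P 0 = 1) (hP1 : P 1 = X)
    (hrec : ∀ n, X * P (n + 1) = P (n + 2) + C (γ (n + 1)) * P n)
    (hγ0 : γ 0 = 0) (hγ : ∀ n, h (n + 1) = γ (n + 1) * h n) (m : ℕ) :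
    L (X * P (m + 2) * P (m + 1)) = γ (m + 2) * h (m + 1) ∧
    L (X ^ 2 * P (m + 2) * P (m + 2)) = (γ (m + 3) + γ (m + 2)) * h (m + 2) ∧
    L (X ^ 3 * P (m + 2) * P (m + 1)) =
      γ (m + 2) * (γ (m + 1) + γ (m + 2) + γ (m + 3)) * h (m + 1) ∧
    L (X ^ 5 * P (m + 2) * P (m + 1)) =
      γ (m + 2) * (γ (m + 1) * (γ m + γ (m + 1) + γ (m + 2))
        + γ (m + 2) * (γ (m + 1) + γ (m + 2) + γ (m + 3))
        + γ (m + 3) * (γ (m + 2) + γ (m + 3) + γ (m + 4))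
        + γ (m + 1) * γ (m + 3)) * h (m + 1) := by
  obtain ⟨Q, hQ⟩ : ∃ Q : ℕ → ℝ[X], Q = fun k => Nat.casesOn k 0 P := ⟨_, rfl⟩
  obtain ⟨g, hg⟩ : ∃ g : ℕ → ℝ, g = fun k => Nat.casesOn k 0 h := ⟨_, rfl⟩
  have hQs : ∀ k, P k = Q (k + 1) := fun k => by rw [hQ]
  have hgs : ∀ k, h k = g (k + 1) := fun k => by rw [hg]
  have hQ0 : Q 0 = 0 := by subst hQ; rfl
  have hg0 : g 0 = 0 := by subst hg; rfl
  have hr : ∀ k, X * Q (k + 1) = Q (k + 2) + C (γ k) * Q k := by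
    intro k
    cases k with
    | zero => rw [← hQs, ← hQs, hP0, hP1, hγ0]; simp
    | succ k => rw [← hQs, ← hQs, ← hQs]; exact hrec k
  have ho : ∀ i j, i ≠ j → L (Q i * Q j) = 0 := by
    intro i j hij
    cases i with
    | zero => simp [hQ0]
    | succ i =>
      cases j with
      | zero => simp [hQ0]
      | succ j => rw [← hQs, ← hQs]; exact horth _ _ (by omega)
  have hd : ∀ i, L (Q i * Q i) = g i := by
    intro i
    cases i with
    | zero => simp [hQ0, hg0]
    | succ i => rw [← hQs, ← hgs]; exact hh _
  have hgg : ∀ k, γ k * g (k + 1) = γ k * (γ k * g k) := by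
    intro k
    cases k with
    | zero => simp [hγ0]
    | succ k => rw [← hgs, ← hgs, hγ]
  have g2 : g (m + 2) = γ (m + 1) * g (m + 1) := by rw [← hgs, ← hgs, hγ]
  have g3 : g (m + 3) = γ (m + 2) * g (m + 2) := by rw [← hgs, ← hgs, hγ]
  have g4 : g (m + 4) = γ (m + 3) * g (m + 3) := by rw [← hgs, ← hgs, hγ]
  have g5 : g (m + 5) = γ (m + 4) * g (m + 4) := by rw [← hgs, ← hgs, hγ]
  have g1 := hgg m
  have r0 := hr m
  have r1 := hr (m + 1)
  have r2 := hr (m + 2)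
  have r3 := hr (m + 3)
  have r4 := hr (m + 4)
  simp only [hQs, hgs]
  simp only [add_assoc, Nat.reduceAdd] at *
  have s1 : X * Q (m + 3) = Q (m + 4) + γ (m + 2) • Q (m + 2) := by
    rw [smul_eq_C_mul]; exact r2
  have t2 : X ^ 2 * Q (m + 2) = Q (m + 4) + (γ (m + 2) + γ (m + 1)) • Q (m + 2)
      + (γ (m + 1) * γ m) • Q m := by
    simp only [smul_eq_C_mul, C_add, C_mul]
    linear_combination X * r1 + r2 + C (γ (m + 1)) * r0
  have s2 : X ^ 2 * Q (m + 3) = Q (m + 5) + (γ (m + 3) + γ (m + 2)) • Q (m + 3)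
      + (γ (m + 2) * γ (m + 1)) • Q (m + 1) := by
    simp only [smul_eq_C_mul, C_add, C_mul]
    linear_combination X * r2 + r3 + C (γ (m + 2)) * r1
  have s3 : X ^ 3 * Q (m + 3) = Q (m + 6)
      + (γ (m + 4) + γ (m + 3) + γ (m + 2)) • Q (m + 4)
      + (γ (m + 2) * (γ (m + 3) + γ (m + 2) + γ (m + 1))) • Q (m + 2)
      + (γ (m + 2) * γ (m + 1) * γ m) • Q m := by
    simp only [smul_eq_C_mul, C_add, C_mul] at s2 ⊢
    linear_combination X * s2 + r4 + (C (γ (m + 3)) + C (γ (m + 2))) * r2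
      + C (γ (m + 2)) * C (γ (m + 1)) * r0
  refine ⟨?_, ?_, ?_, ?_⟩
  · rw [s1]
    simp [add_mul, ho, hd]
  · rw [s2]
    simp [add_mul, ho, hd]
  · rw [s3]
    simp only [add_mul, map_add, smul_mul_assoc, map_smul, hd, smul_eq_mul,
      ho (m + 6) (m + 2) (by omega), ho (m + 4) (m + 2) (by omega), ho m (m + 2) (by omega)]
    ring
  · rw [show X ^ 5 * Q (m + 3) * Q (m + 2) = (X ^ 3 * Q (m + 3)) * (X ^ 2 * Q (m + 2)) by ring,
      s3, t2]
    simp [add_mul, mul_add, ho, hd]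
    rw [g4, g3, g2]
    linear_combination (-(γ (m + 2) * γ (m + 1) * γ (m + 1))) * g1


/-- Laguerre–Freud equation for the recurrence coefficients of the monic
orthogonal polynomials with respect to the weight `e^{-x⁴}` on `[-z, z]`. -/
theorem truncated_freud_laguerre_freud (z : ℝ) (hz : 0 < z)
    (P : ℕ → Polynomial ℝ) (γ h : ℕ → ℝ)
    (hmonic : ∀ n, (P n).Monic)
    (hdeg : ∀ n, (P n).natDegree = n)
    (horth : ∀ m n, m ≠ n →
      ∫ x in (-z)..z, (P m).eval x * (P n).eval x * Real.exp (-x ^ 4) = 0)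
    (hh : ∀ n, h n = ∫ x in (-z)..z, ((P n).eval x) ^ 2 * Real.exp (-x ^ 4))
    (hhpos : ∀ n, 0 < h n)
    (hP0 : P 0 = 1) (hP1 : P 1 = Polynomial.X)
    (hrec : ∀ n, Polynomial.X * P (n + 1) = P (n + 2) + Polynomial.C (γ (n + 1)) * P n)
    (hγ0 : γ 0 = 0)
    (hγ : ∀ n, γ (n + 1) = h (n + 1) / h n)
    (n : ℕ) (hn : 2 ≤ n) :
    z ^ 2 / 4 =
      γ n * (γ (n - 1) * (γ (n - 2) + γ (n - 1) + γ n - z ^ 2)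
          + γ n * (γ (n + 1) + γ n + γ (n - 1) - z ^ 2) + 1 / 4 - (n : ℝ) / 2)
        - γ (n + 1) * (γ (n + 2) * (γ (n + 3) + γ (n + 2) + γ (n + 1) - z ^ 2)
          + γ (n + 1) * (γ (n + 2) + γ (n + 1) + γ n - z ^ 2) - (n : ℝ) / 2 - 3 / 4) := by

  obtain ⟨L, hL, hibp⟩ := tf_functional z
  have ho : ∀ m n, m ≠ n → L (P m * P n) = 0 := by
    intro m n hmn
    rw [hL, ← horth m n hmn]
    simp
  have hd : ∀ n, L (P n * P n) = h n := by
    intro n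
    rw [hL, hh]
    simp [pow_two]
  have hg : ∀ n, h (n + 1) = γ (n + 1) * h n := by
    intro n
    rw [hγ, div_mul_cancel₀ _ (hhpos n).ne']
  have hmom := tf_moments L P γ h ho hd hP0 hP1 hrec hγ0 hg
  have horthq := tf_orth L P h hmonic hdeg ho hd
  have hlead : ∀ d, (P d).coeff d = 1 := fun d => by
    have := hmonic d
    rwa [Polynomial.Monic, Polynomial.leadingCoeff, hdeg] at this
  have hhigh : ∀ d k, d < k → (P d).coeff k = 0 := fun d k hk =>
    Polynomial.coeff_eq_zero_of_natDegree_lt (by rw [hdeg]; exact hk)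
  -- derivative pairings
  have d1 : ∀ k, L (P (k + 1) * Polynomial.derivative (P (k + 2))) = (k + 2) * h (k + 1) := by
    intro k
    apply horthq
    · rw [Polynomial.coeff_derivative, hlead]; push_cast; ring
    · intro j hj
      rw [Polynomial.coeff_derivative, hhigh _ _ (by omega), zero_mul]
  have d2 : ∀ k, L (P (k + 2) * Polynomial.derivative (P (k + 1))) = 0 := by
    intro k
    rw [horthq _ _ 0, zero_mul]
    · rw [Polynomial.coeff_derivative, hhigh _ _ (by omega), zero_mul]
    · intro j hj
      rw [Polynomial.coeff_derivative, hhigh _ _ (by omega), zero_mul]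
  have d3 : ∀ k, L (P (k + 2) * (Polynomial.X ^ 2 * Polynomial.derivative (P (k + 1))))
      = (k + 1) * h (k + 2) := by
    intro k
    apply horthq
    · rw [Polynomial.coeff_X_pow_mul, Polynomial.coeff_derivative, hlead]; ring
    · intro j hj
      obtain ⟨i, rfl⟩ : ∃ i, j = i + 2 := ⟨j - 2, by omega⟩
      rw [Polynomial.coeff_X_pow_mul, Polynomial.coeff_derivative, hhigh _ _ (by omega), zero_mul]
  have main : ∀ k, 2 * (γ (k + 2) * h (k + 1))
      + L (Polynomial.X ^ 2 * Polynomial.derivative (P (k + 2)) * P (k + 1))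
      + (k + 1) * h (k + 2) - z ^ 2 * ((k + 2) * h (k + 1))
      - 4 * (L (Polynomial.X ^ 5 * P (k + 2) * P (k + 1))
        - z ^ 2 * L (Polynomial.X ^ 3 * P (k + 2) * P (k + 1))) = 0 := by
    intro k
    have e := hibp (P (k + 2) * P (k + 1))
    rw [Polynomial.derivative_mul] at e
    rw [← (hmom k).1, ← d3 k, ← d1 k, ← e]
    have e2 := d2 k
    rw [show ∀ a b c d f g : ℝ, 2 * a + b + c - z ^ 2 * d - 4 * (f - z ^ 2 * g)
      = 2 * a + b + c - z ^ 2 * d - z ^ 2 * 0 - 4 * f + (4 * z ^ 2) * g by intros; ring, ← e2]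
    simp only [← smul_eq_mul, ← map_smul, ← map_add, ← map_sub]
    congr 1
    simp only [Polynomial.smul_eq_C_mul, smul_eq_mul, Polynomial.C_mul]
    ring
  obtain ⟨m, rfl⟩ : ∃ m, n = m + 2 := ⟨n - 2, by omega⟩
  have hA : L (Polynomial.X ^ 2 * Polynomial.derivative (P (m + 3)) * P (m + 2))
      = (γ (m + 3) + γ (m + 2)) * h (m + 2) + (m + 2) * h (m + 3)
        + γ (m + 2) * L (Polynomial.X ^ 2 * Polynomial.derivative (P (m + 2)) * P (m + 1))
        - γ (m + 2) * ((m + 1) * h (m + 2)) := by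
    have r := hrec (m + 1)
    have r' := congrArg Polynomial.derivative r
    simp only [Polynomial.derivative_mul, Polynomial.derivative_add, Polynomial.derivative_X,
      Polynomial.derivative_C, add_assoc, Nat.reduceAdd, one_mul, zero_mul, zero_add] at r r'
    have e3 := d3 (m + 1)
    have e : ((m + 1 : ℕ) : ℝ) + 1 = m + 2 := by push_cast; ring
    rw [e] at e3
    simp only [add_assoc, Nat.reduceAdd] at e3
    rw [← (hmom m).2.1, ← e3, ← d3 m]
    simp only [← smul_eq_mul, ← map_smul, ← map_add, ← map_sub]
    congr 1
    simp only [Polynomial.smul_eq_C_mul]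
    linear_combination (-(Polynomial.X ^ 2 * P (m + 2))) * r'
      + Polynomial.X ^ 2 * Polynomial.derivative (P (m + 2)) * r
  have m0 := main m
  have m1 := main (m + 1)
  obtain ⟨-, -, a3, a5⟩ := hmom m
  obtain ⟨-, -, b3, b5⟩ := hmom (m + 1)
  have g2 := hg (m + 1)
  have g3 := hg (m + 2)
  simp only [add_assoc, Nat.reduceAdd] at m0 m1 a3 a5 b3 b5 g2 g3 ⊢
  rw [hA, b3, b5] at m1
  rw [a3, a5] at m0
  have hne := (hhpos (m + 2)).ne'
  rw [show m + 2 - 1 = m + 1 by omega, show m + 2 - 2 = m by omega]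
  apply mul_left_cancel₀ hne
  rw [g3] at m1
  rw [g2] at m0 m1 ⊢
  push_cast at m1 ⊢
  linear_combination (-1 / 4) * m1 + (1 / 4) * γ (m + 2) * m0
end

section
/- For every z > 0, the recurrence coefficients γ_n = γ_n(z) of the monic orthogonal polynomials for the weight e^{−x⁴} on [−z, z] satisfy, for all n ≥ 2, the nonlinear difference relation z²·( n/2 − 2γ_n(γ_{n+1} + γ_n + γ_{n−1}) )² = γ_n·( n + 1/2 − 2γ_n(γ_{n+1} + γ_n + γ_{n−1}) − 2γ_{n+1}(γ_{n+2} + γ_{n+1} + γ_n) )·( n − 1/2 − 2γ_n(γ_{n+1} + γ_n + γ_{n−1}) − 2γ_{n−1}(γ_n + γ_{n−1} + γ_{n−2}) ). -/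
open Polynomial in
/-- The moment functional of the weight. -/
noncomputable def freudL (z : ℝ) : ℝ[X] →ₗ[ℝ] ℝ where
  toFun p := ∫ x in (-z)..z, p.eval x * Real.exp (-x ^ 4)
  map_add' p q := by
    rw [← intervalIntegral.integral_add]
    · congr 1; ext x; simp [add_mul]
    · exact Continuous.intervalIntegrable (by fun_prop) _ _
    · exact Continuous.intervalIntegrable (by fun_prop) _ _
  map_smul' c p := by
    simp only [RingHom.id_apply, smul_eq_mul]
    rw [← intervalIntegral.integral_const_mul]
    congr 1; ext x; simp [mul_assoc]

open Polynomial in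
lemma freudL_parts (z : ℝ) (p : ℝ[X]) :
    freudL z (derivative p) - 4 * freudL z (X ^ 3 * p)
      = p.eval z * Real.exp (-z ^ 4) - p.eval (-z) * Real.exp (-z ^ 4) := by
  have h1 : freudL z (derivative p) - 4 * freudL z (X ^ 3 * p)
      = freudL z (derivative p - (4 : ℝ) • (X ^ 3 * p)) := by
    simp [map_sub, map_smul]
  rw [h1]
  change ∫ x in (-z)..z, _ = _
  have key := intervalIntegral.integral_eq_sub_of_hasDerivAt (a := -z) (b := z)
    (f := fun x => p.eval x * Real.exp (-x ^ 4))
    (f' := fun x => (derivative p - (4 : ℝ) • (X ^ 3 * p)).eval x * Real.exp (-x ^ 4))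
    (fun x _ => by
      have h2 : HasDerivAt (fun x : ℝ => Real.exp (-x ^ 4))
          (Real.exp (-x ^ 4) * (-(4 * x ^ 3))) x := by
        have := ((hasDerivAt_pow 4 x).neg).exp
        simpa using this
      have h3 := (p.hasDerivAt x).mul h2
      refine HasDerivAt.congr_deriv h3 ?_
      simp only [eval_sub, eval_smul, eval_mul, eval_pow, eval_X, smul_eq_mul]
      ring)
    (Continuous.intervalIntegrable (by fun_prop) _ _)
  rw [key]
  have : (-z) ^ 4 = z ^ 4 := by ring
  simp only [this]

open Polynomial in
lemma freud_low (L : ℝ[X] →ₗ[ℝ] ℝ) (P : ℕ → ℝ[X])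
    (hmonic : ∀ n, (P n).Monic) (hdeg : ∀ n, (P n).natDegree = n)
    (horth : ∀ m n, m ≠ n → L (P m * P n) = 0) (k : ℕ) :
    ∀ q : ℝ[X], q.degree < k → ∀ n, k ≤ n → L (q * P n) = 0 := by
  induction k with
  | zero =>
    intro q hq n _
    have : q = 0 := by
      rw [← degree_eq_bot]
      simpa using hq
    simp [this]
  | succ k ih =>
    intro q hq n hn
    have h1 : (q - q.coeff k • P k).degree < k := by
      rw [degree_lt_iff_coeff_zero]
      intro m hm
      rcases hm.eq_or_lt with rfl | hm
      · have := (hmonic k).coeff_natDegree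
        rw [hdeg] at this
        simp [this]
      · have h2 : (P k).coeff m = 0 := coeff_eq_zero_of_natDegree_lt (by rw [hdeg]; exact hm)
        have h3 : q.coeff m = 0 := (degree_lt_iff_coeff_zero _ _).1 hq m hm
        simp [h2, h3]
    have h2 := ih _ h1 n (by omega)
    rw [sub_mul, map_sub, smul_mul_assoc, map_smul, horth k n (by omega)] at h2
    simpa using h2

open Polynomial in
lemma freud_top (L : ℝ[X] →ₗ[ℝ] ℝ) (P : ℕ → ℝ[X])
    (hmonic : ∀ n, (P n).Monic) (hdeg : ∀ n, (P n).natDegree = n)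
    (horth : ∀ m n, m ≠ n → L (P m * P n) = 0) (n : ℕ) 
    (q : ℝ[X]) (hq : q.degree < (n + 1 : ℕ)) : L (q * P n) = q.coeff n * L (P n * P n) := by
  have h1 : (q - q.coeff n • P n).degree < n := by
    rw [degree_lt_iff_coeff_zero]
    intro m hm
    rcases hm.eq_or_lt with rfl | hm
    · have := (hmonic n).coeff_natDegree
      rw [hdeg] at this
      simp [this]
    · have h2 : (P n).coeff m = 0 := coeff_eq_zero_of_natDegree_lt (by rw [hdeg]; exact hm)
      have h3 : q.coeff m = 0 := (degree_lt_iff_coeff_zero _ _).1 hq m hm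
      simp [h2, h3]
  have h2 := freud_low L P hmonic hdeg horth n _ h1 n le_rfl
  rw [sub_mul, map_sub, smul_mul_assoc, map_smul] at h2
  simpa [sub_eq_zero] using h2

open Polynomial in
lemma freud_T (L : ℝ[X] →ₗ[ℝ] ℝ) (P : ℕ → ℝ[X]) (γ h : ℕ → ℝ)
    (horth : ∀ m n, m ≠ n → L (P m * P n) = 0) (hL : ∀ n, L (P n * P n) = h n)
    (hP0 : P 0 = 1) (hP1 : P 1 = X)
    (hrec : ∀ n, X * P (n + 1) = P (n + 2) + γ (n + 1) • P n)
    (hγ0 : γ 0 = 0) (hγ : ∀ n, h (n + 1) = γ (n + 1) * h n) (m : ℕ) :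
    L (X ^ 3 * (P (m + 1) * P m)) = h (m + 1) * (γ (m + 2) + γ (m + 1) + γ m) := by
  rcases m with _ | m
  · have e : X ^ 3 * (P (0 + 1) * P 0) = (P 2 + γ 1 • P 0) * (P 2 + γ 1 • P 0) := by
      rw [← hrec 0]; simp only [zero_add]; rw [hP0, hP1]; ring
    rw [e]
    simp only [add_mul, mul_add, smul_mul_assoc, mul_smul_comm, map_add, map_smul, smul_eq_mul, hL,
      horth 2 0 (by omega), horth 0 2 (by omega), zero_add, hγ 1, hγ 0, hγ0]
    ring
  · have e2 : X * (X * P (m + 2)) = (P (m + 4) + γ (m + 3) • P (m + 2))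
        + γ (m + 2) • (P (m + 2) + γ (m + 1) • P m) := by
      rw [← hrec m, ← hrec (m + 2), hrec (m + 1), mul_add, mul_smul_comm]
    have e : X ^ 3 * (P (m + 1 + 1) * P (m + 1)) = (P (m + 2) + γ (m + 1) • P m) *
        ((P (m + 4) + γ (m + 3) • P (m + 2))
        + γ (m + 2) • (P (m + 2) + γ (m + 1) • P m)) := by
      rw [← e2, ← hrec m]; ring
    rw [e]
    simp only [add_mul, mul_add, smul_mul_assoc, mul_smul_comm, map_add, map_smul, smul_eq_mul, hL,
      smul_add,
      horth (m + 2) m (by omega), horth m (m + 2) (by omega), horth (m + 2) (m + 4) (by omega),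
      horth m (m + 4) (by omega), hγ (m + 1), hγ m, add_assoc, Nat.reduceAdd]
    ring

open Polynomial in
lemma freud_parity (P : ℕ → ℝ[X]) (γ : ℕ → ℝ) (z : ℝ) (hP0 : P 0 = 1) (hP1 : P 1 = X)
    (hrec : ∀ n, X * P (n + 1) = P (n + 2) + γ (n + 1) • P n) (n : ℕ) :
    (P n).eval (-z) = (-1) ^ n * (P n).eval z ∧
      (P (n + 1)).eval (-z) = (-1) ^ (n + 1) * (P (n + 1)).eval z := by
  induction n with
  | zero => simp [hP0, hP1]
  | succ n ih =>
    refine ⟨ih.2, ?_⟩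
    have h1 := congrArg (eval z) (hrec n)
    have h2 := congrArg (eval (-z)) (hrec n)
    simp only [eval_mul, eval_X, eval_add, eval_smul, smul_eq_mul] at h1 h2
    rw [ih.1, ih.2] at h2
    have e : (-1 : ℝ) ^ (n + 1 + 1) = (-1) ^ n := by ring
    have e' : (-1 : ℝ) ^ (n + 1) = - (-1) ^ n := by ring
    rw [e'] at h2
    rw [e]
    linear_combination -h2 + (-1) ^ n * h1


/-- Nonlinear difference relation for the recurrence coefficients of the monic
orthogonal polynomials with respect to the weight `e^{-x⁴}` on `[-z, z]`. -/
theorem truncated_freud_nonlinear_relation (z : ℝ) (hz : 0 < z)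
    (P : ℕ → Polynomial ℝ) (γ h : ℕ → ℝ)
    (hmonic : ∀ n, (P n).Monic)
    (hdeg : ∀ n, (P n).natDegree = n)
    (horth : ∀ m n, m ≠ n →
      ∫ x in (-z)..z, (P m).eval x * (P n).eval x * Real.exp (-x ^ 4) = 0)
    (hh : ∀ n, h n = ∫ x in (-z)..z, ((P n).eval x) ^ 2 * Real.exp (-x ^ 4))
    (hhpos : ∀ n, 0 < h n)
    (hP0 : P 0 = 1) (hP1 : P 1 = Polynomial.X)
    (hrec : ∀ n, Polynomial.X * P (n + 1) = P (n + 2) + Polynomial.C (γ (n + 1)) * P n)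
    (hγ0 : γ 0 = 0)
    (hγ : ∀ n, γ (n + 1) = h (n + 1) / h n)
    (n : ℕ) (hn : 2 ≤ n) :
    z ^ 2 * ((n : ℝ) / 2 - 2 * γ n * (γ (n + 1) + γ n + γ (n - 1))) ^ 2 =
      γ n * ((n : ℝ) + 1 / 2 - 2 * γ n * (γ (n + 1) + γ n + γ (n - 1))
          - 2 * γ (n + 1) * (γ (n + 2) + γ (n + 1) + γ n))
        * ((n : ℝ) - 1 / 2 - 2 * γ n * (γ (n + 1) + γ n + γ (n - 1))
          - 2 * γ (n - 1) * (γ n + γ (n - 1) + γ (n - 2))) := by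

  have hrec' : ∀ n, Polynomial.X * P (n + 1) = P (n + 2) + γ (n + 1) • P n := by
    intro n; rw [hrec, Polynomial.smul_eq_C_mul]
  have ho : ∀ m n, m ≠ n → freudL z (P m * P n) = 0 := by
    intro m n hmn
    rw [← horth m n hmn]
    simp [freudL]
  have hL : ∀ n, freudL z (P n * P n) = h n := by
    intro n
    rw [hh n]
    simp [freudL, pow_two]
  have hγ' : ∀ n, h (n + 1) = γ (n + 1) * h n := by
    intro n
    rw [hγ, div_mul_cancel₀ _ (hhpos n).ne']
  have hT := freud_T (freudL z) P γ h ho hL hP0 hP1 hrec' hγ0 hγ'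
  have hpar := fun n => (freud_parity P γ z hP0 hP1 hrec' n).1
  have htop := freud_top (freudL z) P hmonic hdeg ho
  have hlow := freud_low (freudL z) P hmonic hdeg ho
  have hPdeg : ∀ n, (P n).degree = n := fun n => by
    rw [Polynomial.degree_eq_natDegree (hmonic n).ne_zero, hdeg]
  have hcoeff : ∀ n, (P n).coeff n = 1 := fun n => by
    have := (hmonic n).coeff_natDegree
    rwa [hdeg] at this
  have hdd : ∀ n, (Polynomial.derivative (P n)).degree < n := fun n => by
    rw [← hPdeg n]
    exact Polynomial.degree_derivative_lt (hmonic n).ne_zero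
  -- first identity
  have hA : ∀ n, (P (n + 1)).eval z * (P n).eval z * Real.exp (-z ^ 4)
      = h n * (((n : ℝ) + 1) / 2 - 2 * γ (n + 1) * (γ (n + 2) + γ (n + 1) + γ n)) := by
    intro n
    have h1 := freudL_parts z (P (n + 1) * P n)
    rw [hT n, Polynomial.derivative_mul, map_add, htop n _ (hdd (n + 1)),
      mul_comm (P (n + 1)), hlow (n + 1) _ ((hdd n).trans (by exact_mod_cast Nat.lt_succ_self n))
        (n + 1) le_rfl, Polynomial.coeff_derivative, hcoeff, hL, hγ' n, Polynomial.eval_mul,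
        Polynomial.eval_mul, hpar, hpar] at h1
    have e : ((-1 : ℝ) ^ n) ^ 2 = 1 := by rw [← pow_mul, mul_comm, pow_mul]; simp
    rw [pow_succ (-1 : ℝ) n] at h1
    linear_combination (-1 / 2) * h1 - (1 / 2) * (P (n + 1)).eval z * (P n).eval z * Real.exp (-z ^ 4) * e
  -- second identity
  have hB : ∀ n, z * (P (n + 1)).eval z ^ 2 * Real.exp (-z ^ 4)
      = h (n + 1) * (((n : ℝ) + 1) + 1 / 2 - 2 * γ (n + 1) * (γ (n + 2) + γ (n + 1) + γ n)
        - 2 * γ (n + 2) * (γ (n + 3) + γ (n + 2) + γ (n + 1))) := by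
    intro n
    have h1 := freudL_parts z (Polynomial.X * (P (n + 1) * P (n + 1)))
    have e1 : (Polynomial.X ^ 3 * (Polynomial.X * (P (n + 1) * P (n + 1))))
        = Polynomial.X ^ 3 * (P (n + 2) * P (n + 1))
          + γ (n + 1) • (Polynomial.X ^ 3 * (P (n + 1) * P n)) := by
      rw [← mul_assoc Polynomial.X, hrec', add_mul, mul_add, smul_mul_assoc, mul_smul_comm,
        mul_comm (P n)]
    have e2 : Polynomial.derivative (Polynomial.X * (P (n + 1) * P (n + 1)))
        = P (n + 1) * P (n + 1)
          + (2 : ℝ) • ((Polynomial.derivative (P (n + 1)) * Polynomial.X) * P (n + 1)) := by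
      rw [Polynomial.derivative_mul, Polynomial.derivative_mul, Polynomial.derivative_X, two_smul]
      ring
    have e3 : (Polynomial.derivative (P (n + 1)) * Polynomial.X).degree < ((n + 1 + 1 : ℕ) : WithBot ℕ) := by
      rw [Polynomial.degree_lt_iff_coeff_zero]
      intro m hm
      obtain ⟨m, rfl⟩ : ∃ j, m = j + 1 := ⟨m - 1, by omega⟩
      rw [Polynomial.coeff_mul_X]
      exact (Polynomial.degree_lt_iff_coeff_zero _ _).1 (hdd (n + 1)) m (by omega)
    rw [e1, e2, map_add, map_add, map_smul, map_smul, htop _ _ e3, hT n, hT (n + 1),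
      Polynomial.coeff_mul_X, Polynomial.coeff_derivative, hcoeff, hL, hγ' (n + 1)] at h1
    simp only [Polynomial.eval_mul, Polynomial.eval_X, hpar, smul_eq_mul, add_assoc,
      Nat.reduceAdd] at h1
    have e : ((-1 : ℝ) ^ (n + 1)) ^ 2 = 1 := by rw [← pow_mul, mul_comm, pow_mul]; simp
    linear_combination (-1 / 2) * h1 - (1 / 2) * z * (P (n + 1)).eval z ^ 2 * Real.exp (-z ^ 4) * e
  obtain ⟨k, rfl⟩ : ∃ k, n = k + 2 := ⟨n - 2, by omega⟩
  have a := hA (k + 1)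
  have b1 := hB k
  have b2 := hB (k + 1)
  have hk := hγ' (k + 1)
  have hne := (hhpos (k + 1)).ne'
  simp only [show k + 2 - 1 = k + 1 from rfl, show k + 2 - 2 = k from rfl]
  simp only [add_assoc, Nat.reduceAdd] at a b1 b2 hk ⊢
  rw [hk] at b2
  push_cast at a b1 b2 ⊢
  apply mul_left_cancel₀ (pow_ne_zero 2 hne)
  set u := (P (k + 1)).eval z
  set v := (P (k + 2)).eval z
  set w := Real.exp (-z ^ 4)
  have hprod : z ^ 2 * (v * u * w) ^ 2 = (z * v ^ 2 * w) * (z * u ^ 2 * w) := by ring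
  rw [a, b1, b2] at hprod
  linear_combination hprod
end

section
/- For every z > 0, define g_0 = 0 and g_n = n/2 − 2γ_n·(γ_{n+1} + γ_n + γ_{n−1}) for n ≥ 1, where γ_n = γ_n(z) are the recurrence coefficients of the monic orthogonal polynomials for the weight e^{−x⁴} on [−z, z]. Then for all n ≥ 1 the coupled nonlinear relation z²·g_n² = γ_n·(g_{n+1} + g_n)·(g_n + g_{n−1}) holds. -/
open Polynomial in
theorem tf_intervalIntegrable (z : ℝ) (p : Polynomial ℝ) :
    IntervalIntegrable (fun x : ℝ => p.eval x * Real.exp (-x ^ 4)) MeasureTheory.volume (-z) z := by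
  apply Continuous.intervalIntegrable
  have := p.continuous
  fun_prop

/-- The moment functional of the weight. -/
noncomputable def tfL (z : ℝ) : Polynomial ℝ →ₗ[ℝ] ℝ where
  toFun p := ∫ x in (-z)..z, p.eval x * Real.exp (-x ^ 4)
  map_add' p q := by
    rw [← intervalIntegral.integral_add (tf_intervalIntegrable z p) (tf_intervalIntegrable z q)]
    congr 1; ext x; simp [add_mul]
  map_smul' c p := by
    simp only [RingHom.id_apply, smul_eq_mul]
    rw [← intervalIntegral.integral_const_mul]
    congr 1; ext x; simp [mul_assoc]

theorem tfL_apply (z : ℝ) (p : Polynomial ℝ) :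
    tfL z p = ∫ x in (-z)..z, p.eval x * Real.exp (-x ^ 4) := rfl

theorem tfL_C_mul (z c : ℝ) (p : Polynomial ℝ) :
    tfL z (Polynomial.C c * p) = c * tfL z p := by
  rw [← Polynomial.smul_eq_C_mul, map_smul, smul_eq_mul]

theorem tfL_parts (z : ℝ) (p : Polynomial ℝ) :
    tfL z (Polynomial.derivative p) = (p.eval z - p.eval (-z)) * Real.exp (-z ^ 4)
      + 4 * tfL z (Polynomial.X ^ 3 * p) := by
  have key : tfL z (Polynomial.derivative p - Polynomial.C 4 * (Polynomial.X ^ 3 * p)) =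
      p.eval z * Real.exp (-z ^ 4) - p.eval (-z) * Real.exp (-(-z) ^ 4) := by
    rw [tfL_apply]
    refine intervalIntegral.integral_eq_sub_of_hasDerivAt
      (f := fun x => p.eval x * Real.exp (-x ^ 4)) ?_ (tf_intervalIntegrable z _)
    intro x _
    have h1 := p.hasDerivAt x
    have h2 : HasDerivAt (fun x : ℝ => Real.exp (-x ^ 4)) (Real.exp (-x ^ 4) * (-(4 * x ^ 3))) x := by
      have := ((hasDerivAt_pow 4 x).neg).exp
      simpa using this
    refine (h1.mul h2).congr_deriv ?_
    simp
    ring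
  rw [map_sub, tfL_C_mul] at key
  have e : (-z) ^ 4 = z ^ 4 := by ring
  rw [e] at key
  linarith

theorem tf_orth_lower (z : ℝ) (P : ℕ → Polynomial ℝ)
    (hmonic : ∀ n, (P n).Monic) (hdeg : ∀ n, (P n).natDegree = n)
    (ho : ∀ m n, m ≠ n → tfL z (P m * P n) = 0) (n : ℕ) :
    ∀ d, d ≤ n → ∀ q : Polynomial ℝ, q.degree < d → tfL z (q * P n) = 0 := by
  intro d
  induction d with
  | zero =>
    intro _ q hq
    have : q = 0 := by simpa using hq
    simp [this]
  | succ d ih =>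
    intro hd q hq
    have h0 : tfL z ((q - Polynomial.C (q.coeff d) * P d) * P n) = 0 := by
      apply ih (by omega)
      rw [Polynomial.degree_lt_iff_coeff_zero] at hq ⊢
      intro k hk
      rw [Polynomial.coeff_sub, Polynomial.coeff_C_mul]
      rcases hk.eq_or_lt with rfl | hk
      · have := hmonic d
        rw [Polynomial.Monic, Polynomial.leadingCoeff, hdeg] at this
        simp [this]
      · rw [hq k hk, Polynomial.coeff_eq_zero_of_natDegree_lt (p := P d) (by rw [hdeg]; exact hk)]
        simp
    rw [sub_mul, map_sub, mul_assoc, tfL_C_mul, ho d n (by omega)] at h0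
    simpa using h0

/-- The quantities `g_n = n/2 - 2γ_n(γ_{n+1}+γ_n+γ_{n-1})` (with `g_0 = 0`)
satisfy the coupled nonlinear relation `z²·g_n² = γ_n·(g_{n+1}+g_n)·(g_n+g_{n-1})`
for all `n ≥ 1`. -/
theorem truncated_freud_gn_relation (z : ℝ) (hz : 0 < z)
    (P : ℕ → Polynomial ℝ) (γ h : ℕ → ℝ)
    (hmonic : ∀ n, (P n).Monic)
    (hdeg : ∀ n, (P n).natDegree = n)
    (horth : ∀ m n, m ≠ n →
      ∫ x in (-z)..z, (P m).eval x * (P n).eval x * Real.exp (-x ^ 4) = 0)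
    (hh : ∀ n, h n = ∫ x in (-z)..z, ((P n).eval x) ^ 2 * Real.exp (-x ^ 4))
    (hhpos : ∀ n, 0 < h n)
    (hP0 : P 0 = 1) (hP1 : P 1 = Polynomial.X)
    (hrec : ∀ n, Polynomial.X * P (n + 1) = P (n + 2) + Polynomial.C (γ (n + 1)) * P n)
    (hγ0 : γ 0 = 0)
    (hγ : ∀ n, γ (n + 1) = h (n + 1) / h n)
    (g : ℕ → ℝ) (hg0 : g 0 = 0)
    (hg : ∀ n, 1 ≤ n → g n = (n : ℝ) / 2 - 2 * γ n * (γ (n + 1) + γ n + γ (n - 1))) :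
    ∀ n, 1 ≤ n → z ^ 2 * g n ^ 2 = γ n * (g (n + 1) + g n) * (g n + g (n - 1)) := by
  have ho : ∀ m n, m ≠ n → tfL z (P m * P n) = 0 := by
    intro m n hmn
    rw [tfL_apply, ← horth m n hmn]
    simp
  have hn : ∀ n, tfL z (P n * P n) = h n := by
    intro n
    rw [tfL_apply, hh n]
    simp [sq]
  have hne : ∀ n, h n ≠ 0 := fun n => (hhpos n).ne'
  have hγh : ∀ n, γ (n + 1) * h n = h (n + 1) := fun n => by
    rw [hγ n, div_mul_cancel₀ _ (hne n)]
  have hpar : ∀ n, (P n).eval (-z) = (-1) ^ n * (P n).eval z ∧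
      (P (n + 1)).eval (-z) = (-1) ^ (n + 1) * (P (n + 1)).eval z := by
    intro n
    induction n with
    | zero => simp [hP0, hP1]
    | succ n ih =>
      refine ⟨ih.2, ?_⟩
      have a := congrArg (Polynomial.eval z) (hrec n)
      have b := congrArg (Polynomial.eval (-z)) (hrec n)
      simp only [Polynomial.eval_mul, Polynomial.eval_X, Polynomial.eval_add,
        Polynomial.eval_C] at a b
      rw [ih.1, ih.2] at b
      rw [show n + 1 + 1 = n + 2 from rfl]
      have e : (P (n + 2)).eval z = z * (P (n + 1)).eval z - γ (n + 1) * (P n).eval z := by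
        linarith
      rw [e]
      have : (P (n + 2)).eval (-z) = -z * ((-1) ^ (n + 1) * (P (n + 1)).eval z)
        - γ (n + 1) * ((-1) ^ n * (P n).eval z) := by linarith
      rw [this]
      ring
  -- inner products of X * P m
  have hrec' : ∀ m, Polynomial.X * P m = P (m + 1) + Polynomial.C (γ m) * P (m - 1) := by
    intro m
    cases m with
    | zero => simp [hP0, hP1, hγ0]
    | succ m => exact hrec m
  have hx1 : ∀ m k, 1 ≤ k → tfL z (Polynomial.X * P m * P (m + k)) = if k = 1 then h (m + 1) else 0 := by
    intro m k hk
    rw [hrec', add_mul, map_add, mul_assoc, tfL_C_mul, ho (m - 1) (m + k) (by omega)]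
    split_ifs with hk1
    · subst hk1
      rw [hn]; ring
    · rw [ho _ _ (by omega)]; ring
  have hxx : ∀ m, tfL z (Polynomial.X * P m * (Polynomial.X * P m)) = h (m + 1) + γ m * h m := by
    intro m
    cases m with
    | zero =>
      rw [hrec', hγ0]
      simp [hn]
    | succ m =>
      have e : Polynomial.X * P (m + 1) * (Polynomial.X * P (m + 1)) =
        P (m + 2) * P (m + 2) + Polynomial.C (2 * γ (m + 1)) * (P m * P (m + 2))
        + Polynomial.C (γ (m + 1) ^ 2) * (P m * P m) := by
        rw [hrec]
        simp only [Polynomial.C_mul, Polynomial.C_pow, Polynomial.C_ofNat]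
        ring
      rw [e, map_add, map_add, tfL_C_mul, tfL_C_mul, hn, hn, ho _ _ (by omega), ← hγh m]
      ring
  have hx3 : ∀ m, tfL z (Polynomial.X ^ 3 * (P (m + 1) * P m)) =
      h (m + 1) * (γ (m + 2) + γ (m + 1) + γ m) := by
    intro m
    have e : Polynomial.X ^ 3 * (P (m + 1) * P m) =
        Polynomial.X * P m * P (m + 3) + Polynomial.C (γ (m + 2)) * (Polynomial.X * P m * P (m + 1))
        + Polynomial.C (γ (m + 1)) * (Polynomial.X * P m * (Polynomial.X * P m)) := by
      have a := hrec m
      have b := hrec (m + 1)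
      linear_combination (Polynomial.X ^ 2 * P m) * a + (Polynomial.X * P m) * b
    rw [e, map_add, map_add, tfL_C_mul, tfL_C_mul, hx1 m 3 (by omega), hx1 m 1 le_rfl, hxx]
    simp only [show (3 : ℕ) ≠ 1 by omega, if_true, if_false]
    linear_combination γ m * hγh m
  have hd1 : ∀ m : ℕ, tfL z (Polynomial.derivative (P (m + 1) * P m)) = (m + 1) * h m := by
    intro m
    have l1 : tfL z ((Polynomial.derivative (P (m + 1)) - Polynomial.C ((m : ℝ) + 1) * P m) * P m)
        = 0 := by
      apply tf_orth_lower z P hmonic hdeg ho m m le_rfl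
      rw [Polynomial.degree_lt_iff_coeff_zero]
      intro k hk
      rw [Polynomial.coeff_sub, Polynomial.coeff_C_mul, Polynomial.coeff_derivative]
      rcases hk.eq_or_lt with rfl | hk
      · have a := hmonic m
        have b := hmonic (m + 1)
        rw [Polynomial.Monic, Polynomial.leadingCoeff, hdeg] at a b
        rw [a, b]; ring
      · rw [Polynomial.coeff_eq_zero_of_natDegree_lt (p := P m) (by rw [hdeg]; exact hk),
          Polynomial.coeff_eq_zero_of_natDegree_lt (p := P (m + 1)) (by rw [hdeg]; omega)]
        simp
    have l2 : tfL z (Polynomial.derivative (P m) * P (m + 1)) = 0 := by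
      apply tf_orth_lower z P hmonic hdeg ho (m + 1) (m + 1) le_rfl
      rw [Polynomial.degree_lt_iff_coeff_zero]
      intro k hk
      rw [Polynomial.coeff_derivative,
        Polynomial.coeff_eq_zero_of_natDegree_lt (by rw [hdeg]; omega), zero_mul]
    rw [sub_mul, map_sub, mul_assoc, tfL_C_mul, hn] at l1
    rw [Polynomial.derivative_mul, map_add, mul_comm (P (m + 1)), l2]
    linarith
  set w := Real.exp (-z ^ 4) with hw
  have hgm : ∀ m, g (m + 1) * h m = (P (m + 1)).eval z * (P m).eval z * w := by
    intro m
    have a := tfL_parts z (P (m + 1) * P m)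
    rw [hd1, hx3, Polynomial.eval_mul, Polynomial.eval_mul, (hpar m).1, (hpar m).2] at a
    have s : ((-1 : ℝ) ^ m) ^ 2 = 1 := by rw [← pow_mul, mul_comm, pow_mul]; simp
    rw [hg (m + 1) (by omega)]
    simp only [Nat.add_sub_cancel]
    push_cast
    rw [← hw] at a
    rw [show m + 1 + 1 = m + 2 from rfl]
    linear_combination (1 / 2) * a - 2 * (γ (m + 2) + γ (m + 1) + γ m) * hγh m
      + (1 / 2) * ((P (m + 1)).eval z * (P m).eval z * w) * s
  have hsum : ∀ m, (g (m + 1) + g m) * h m = z * (P m).eval z ^ 2 * w := by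
    intro m
    cases m with
    | zero =>
      have := hgm 0
      rw [hg0, add_zero, this]
      simp [hP0, hP1]
    | succ m =>
      have a := congrArg (Polynomial.eval z) (hrec m)
      simp only [Polynomial.eval_mul, Polynomial.eval_X, Polynomial.eval_add,
        Polynomial.eval_C] at a
      have b := hgm (m + 1)
      have c := hgm m
      rw [show m + 1 + 1 = m + 2 from rfl] at *
      linear_combination b + γ (m + 1) * c - g (m + 1) * hγh m - (P (m + 1)).eval z * w * a
  intro n hn1
  obtain ⟨m, rfl⟩ : ∃ m, n = m + 1 := ⟨n - 1, by omega⟩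
  simp only [Nat.add_sub_cancel]
  have A := hsum (m + 1)
  have B := hsum m
  have C := hgm m
  have D := hγh m
  apply mul_right_cancel₀ (mul_ne_zero (hne m) (hne m))
  calc z ^ 2 * g (m + 1) ^ 2 * (h m * h m) = z ^ 2 * (g (m + 1) * h m) ^ 2 := by ring
    _ = (z * (P (m + 1)).eval z ^ 2 * w) * (z * (P m).eval z ^ 2 * w) := by rw [C]; ring
    _ = ((g (m + 1 + 1) + g (m + 1)) * h (m + 1)) * ((g (m + 1) + g m) * h m) := by rw [A, B]
    _ = _ := by rw [← D]; ring
end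

section
/- For every fixed z > 0, the quantities g_n(z) = n/2 − 2γ_n(z)·(γ_{n+1}(z) + γ_n(z) + γ_{n−1}(z)) admit the asymptotic expansion g_n(z) = n/2 − 3z⁴/8 − (3z⁴/16)·n^{−2} − (9z⁸/32)·n^{−3} − (3z⁴(22 + 27z⁸)/256)·n^{−4} + O(n^{−5}) as n → ∞; that is, the difference g_n(z) − [ n/2 − 3z⁴/8 − (3z⁴/16)n^{−2} − (9z⁸/32)n^{−3} − (3z⁴(22+27z⁸)/256)n^{−4} ] is O(n^{−5}) as n → ∞. -/
open Asymptotics Filter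

namespace TF

/-- scaled expansion of `g_{n+s}/n` in `x = 1/n` -/
noncomputable def uh (z s x : ℝ) : ℝ :=
  (1 + s * x) / 2 - 3 * z ^ 4 / 8 * x - 3 * z ^ 4 / 16 * (x ^ 3 - 2 * s * x ^ 4 + 3 * s ^ 2 * x ^ 5)
    - 9 * z ^ 8 / 32 * (x ^ 4 - 3 * s * x ^ 5) - 3 * z ^ 4 * (22 + 27 * z ^ 8) / 256 * x ^ 5

/-- expansion of `γ_{n+s}` in `x = 1/n` -/
noncomputable def gh (z s x : ℝ) : ℝ :=
  z ^ 2 * (1 / 4 + (x ^ 2 - 2 * s * x ^ 3 + 3 * s ^ 2 * x ^ 4) / 16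
    + 3 * z ^ 4 / 32 * (x ^ 3 - 3 * s * x ^ 4) + (1 / 64 + 27 * z ^ 8 / 256) * x ^ 4)

noncomputable def xx (n : ℕ) : ℝ := 1 / (n : ℝ)

lemma xx_tendsto : Tendsto xx atTop (nhds 0) := tendsto_one_div_atTop_nhds_zero_nat

lemma bigO_of_cont (Φ : ℝ → ℝ) (hΦ : ContinuousAt Φ 0) :
    (fun n => Φ (xx n)) =O[atTop] fun _ : ℕ => (1 : ℝ) :=
  (hΦ.tendsto.comp xx_tendsto).isBigO_one ℝ

lemma xx_pow_le {j k : ℕ} (h : j ≤ k) :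
    (fun n => xx n ^ k) =O[atTop] fun n => xx n ^ j := by
  obtain ⟨d, rfl⟩ := Nat.exists_eq_add_of_le h
  have := (isBigO_refl (fun n => xx n ^ j) atTop).mul
    (bigO_of_cont (fun x => x ^ d) (by fun_prop))
  simpa [pow_add] using this

lemma shift_add {f : ℕ → ℝ} {k : ℕ} (h : f =O[atTop] fun n => xx n ^ k) :
    (fun n => f (n + 1)) =O[atTop] fun n => xx n ^ k := by
  have h1 := h.comp_tendsto (tendsto_add_atTop_nat 1)
  refine h1.trans ?_
  have h2 : (fun n => xx (n + 1)) =O[atTop] fun n => xx n := by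
    refine IsBigO.of_bound 1 ?_
    filter_upwards [eventually_ge_atTop 1] with n hn
    have : (1 : ℝ) ≤ n := by exact_mod_cast hn
    unfold xx
    rw [Real.norm_of_nonneg (by positivity), Real.norm_of_nonneg (by positivity), one_mul]
    push_cast
    exact one_div_le_one_div_of_le (by linarith) (by linarith)
  exact h2.pow k

lemma shift_sub {f : ℕ → ℝ} {k : ℕ} (h : f =O[atTop] fun n => xx n ^ k) :
    (fun n => f (n - 1)) =O[atTop] fun n => xx n ^ k := by
  have h1 := h.comp_tendsto (tendsto_sub_atTop_nat 1)
  refine h1.trans ?_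
  have h2 : (fun n => xx (n - 1)) =O[atTop] fun n => xx n := by
    refine IsBigO.of_bound 2 ?_
    filter_upwards [eventually_ge_atTop 2] with n hn
    have h2 : (2 : ℝ) ≤ n := by exact_mod_cast hn
    unfold xx
    rw [Nat.cast_sub (by omega)]
    push_cast
    have : (0 : ℝ) < n - 1 := by linarith
    rw [Real.norm_of_nonneg (by positivity), Real.norm_of_nonneg (by positivity)]
    rw [mul_one_div, div_le_div_iff₀ (by linarith) (by linarith)]
    linarith
  exact h2.pow k

/-- the expansion evaluated at the shifted variable versus re-expanded -/
lemma uh_shift (z s : ℝ) (hs : s ^ 2 = 1) (x : ℝ) (hx : 1 + s * x ≠ 0) :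
    (1 + s * x) * uh z 0 (x / (1 + s * x)) - uh z s x = x ^ 6 *
      (3 * z ^ 4 / 16 * ((4 * s + 3 * x) / (1 + s * x) ^ 2)
        - 9 * z ^ 8 / 32 * ((6 + 8 * s * x + 3 * x ^ 2) / (1 + s * x) ^ 3)
        + 3 * z ^ 4 * (22 + 27 * z ^ 8) / 256 *
          ((4 * s + 6 * x + 4 * s * x ^ 2 + x ^ 3) / (1 + s * x) ^ 4)) := by
  have hs' : s = 1 ∨ s = -1 := by simpa using hs
  unfold uh
  rcases hs' with rfl | rfl
  · obtain ⟨y, rfl⟩ : ∃ y, x = y - 1 := ⟨x + 1, by ring⟩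
    have e : 1 + 1 * (y - 1) = y := by ring
    rw [e] at hx ⊢
    field_simp
    ring
  · obtain ⟨y, rfl⟩ : ∃ y, x = 1 - y := ⟨1 - x, by ring⟩
    have e : 1 + -1 * (1 - y) = y := by ring
    rw [e] at hx ⊢
    field_simp
    ring

lemma gh_shift (z s : ℝ) (hs : s ^ 2 = 1) (x : ℝ) (hx : 1 + s * x ≠ 0) :
    gh z 0 (x / (1 + s * x)) - gh z s x = x ^ 5 *
      (z ^ 2 * (- 1 / 16 * ((4 * s + 3 * x) / (1 + s * x) ^ 2)
        + 3 * z ^ 4 / 32 * ((6 + 8 * s * x + 3 * x ^ 2) / (1 + s * x) ^ 3)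
        - (1 / 64 + 27 * z ^ 8 / 256) *
          ((4 * s + 6 * x + 4 * s * x ^ 2 + x ^ 3) / (1 + s * x) ^ 4))) := by
  have hs' : s = 1 ∨ s = -1 := by simpa using hs
  unfold gh
  rcases hs' with rfl | rfl
  · obtain ⟨y, rfl⟩ : ∃ y, x = y - 1 := ⟨x + 1, by ring⟩
    have e : 1 + 1 * (y - 1) = y := by ring
    rw [e] at hx ⊢
    field_simp
    ring
  · obtain ⟨y, rfl⟩ : ∃ y, x = 1 - y := ⟨1 - x, by ring⟩
    have e : 1 + -1 * (1 - y) = y := by ring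
    rw [e] at hx ⊢
    field_simp
    ring

lemma res1 (z x : ℝ) : z ^ 2 * uh z 0 x ^ 2
    - gh z 0 x * ((uh z 0 x + uh z 1 x) * (uh z 0 x + uh z (-1) x)) = x ^ 5 * (z ^ 2 * (
  (15 / 32) * z ^ 4 + (27 / 256) * z ^ 12 + (1 / 256) * x + (63 / 512) * x * z ^ 8 
    + (-243 / 4096) * x * z ^ 16 + (87 / 512) * x ^ 2 * z ^ 4 + (81 / 512) * x ^ 2 * z ^ 12 
    + (243 / 2048) * x ^ 3 * z ^ 8 + (81 / 2048) * x ^ 3 * z ^ 16 + (81 / 2048) * x ^ 4 * z ^ 4 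
    + (1323 / 8192) * x ^ 4 * z ^ 12 + (-729 / 16384) * x ^ 4 * z ^ 20 
    + (-2295 / 8192) * x ^ 5 * z ^ 8 + (-6561 / 32768) * x ^ 5 * z ^ 16 
    + (-6561 / 65536) * x ^ 5 * z ^ 24 + (-27 / 256) * x ^ 6 * z ^ 12 
    + (-2673 / 16384) * x ^ 6 * z ^ 20 + (-5445 / 65536) * x ^ 7 * z ^ 8 
    + (-729 / 4096) * x ^ 7 * z ^ 16 + (-45927 / 262144) * x ^ 7 * z ^ 24 
    + (-15471 / 131072) * x ^ 8 * z ^ 12 + (-2187 / 16384) * x ^ 8 * z ^ 20 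
    + (-59049 / 524288) * x ^ 8 * z ^ 28 + (-4761 / 262144) * x ^ 9 * z ^ 8 
    + (-139239 / 1048576) * x ^ 9 * z ^ 16 + (-19683 / 262144) * x ^ 9 * z ^ 24 
    + (-177147 / 4194304) * x ^ 9 * z ^ 32)) := by
  unfold uh gh
  ring

lemma res2 (z x : ℝ) : uh z 0 x - 1 / 2
    + 2 * x * (gh z 0 x * (gh z 1 x + gh z 0 x + gh z (-1) x)) = x ^ 6 * (
  (9 / 128) * z ^ 8 + (15 / 256) * x * z ^ 4 + (135 / 1024) * x * z ^ 12 
    + (45 / 512) * x ^ 2 * z ^ 8 + (243 / 2048) * x ^ 2 * z ^ 16 + (27 / 2048) * x ^ 3 * z ^ 4 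
    + (405 / 4096) * x ^ 3 * z ^ 12 + (2187 / 32768) * x ^ 3 * z ^ 20) := by
  unfold uh gh
  ring

lemma xx_succ (n : ℕ) (hn : 2 ≤ n) : xx (n + 1) = xx n / (1 + 1 * xx n) ∧ 1 + 1 * xx n ≠ 0 := by
  have : (2 : ℝ) ≤ n := by exact_mod_cast hn
  have h0 : (n : ℝ) ≠ 0 := by linarith
  unfold xx
  have : 1 + 1 * (1 / (n : ℝ)) ≠ 0 := by positivity
  refine ⟨?_, this⟩
  push_cast
  field_simp

lemma xx_pred (n : ℕ) (hn : 2 ≤ n) :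
    xx (n - 1) = xx n / (1 + (-1) * xx n) ∧ 1 + (-1) * xx n ≠ 0 := by
  have h2 : (2 : ℝ) ≤ n := by exact_mod_cast hn
  have h0 : (n : ℝ) ≠ 0 := by linarith
  have h1 : (n : ℝ) - 1 ≠ 0 := by linarith
  unfold xx
  have h3 : 1 + (-1) * (1 / (n : ℝ)) = (n - 1) / n := by field_simp; ring
  rw [h3, Nat.cast_sub (by omega)]
  refine ⟨?_, by positivity⟩
  push_cast
  field_simp

lemma step (z : ℝ) (γ g : ℕ → ℝ) (k : ℕ) (hk : k ≤ 4)
    (hg : ∀ n, 1 ≤ n → g n = (n : ℝ) / 2 - 2 * γ n * (γ (n + 1) + γ n + γ (n - 1)))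
    (hE : ∀ n, 5 ≤ n → z ^ 2 * g n ^ 2 = γ n * ((g n + g (n + 1)) * (g n + g (n - 1))))
    (he : (fun n => g n - n * uh z 0 (xx n)) =O[atTop] fun n => xx n ^ k) :
    (fun n => g n - n * uh z 0 (xx n)) =O[atTop] fun n => xx n ^ (k + 1) := by
  have hxO : xx =O[atTop] xx := isBigO_refl _ _
  have hmul : ∀ n : ℕ, 2 ≤ n → xx n * n = 1 := by
    intro n hn
    have : (n : ℝ) ≠ 0 := by positivity
    unfold xx
    field_simp
  -- scaled errors
  have e0 : (fun n => xx n * g n - uh z 0 (xx n)) =O[atTop] fun n => xx n ^ (k + 1) := by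
    have := hxO.mul he
    refine this.congr' ?_ (Eventually.of_forall fun n => by ring)
    filter_upwards [eventually_ge_atTop 2] with n hn
    linear_combination (-uh z 0 (xx n)) * hmul n hn
  have e1 : (fun n => xx n * g (n + 1) - uh z 1 (xx n)) =O[atTop] fun n => xx n ^ (k + 1) := by
    have h1 := hxO.mul (shift_add he)
    have h2 := (xx_pow_le (show k + 1 ≤ 6 by omega)).mul (bigO_of_cont (fun x =>
      (3 * z ^ 4 / 16 * ((4 * 1 + 3 * x) / (1 + 1 * x) ^ 2)
        - 9 * z ^ 8 / 32 * ((6 + 8 * 1 * x + 3 * x ^ 2) / (1 + 1 * x) ^ 3)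
        + 3 * z ^ 4 * (22 + 27 * z ^ 8) / 256 *
          ((4 * 1 + 6 * x + 4 * 1 * x ^ 2 + x ^ 3) / (1 + 1 * x) ^ 4)))
      (by fun_prop (disch := norm_num)))
    have h3 := (h1.congr_right (fun n => (pow_succ' (xx n) k).symm)).add
      (h2.congr_right (fun n => mul_one _))
    refine h3.congr' ?_ EventuallyEq.rfl
    filter_upwards [eventually_ge_atTop 2] with n hn
    have ⟨a, b⟩ := xx_succ n hn
    have := uh_shift z 1 (by norm_num) (xx n) b
    rw [← this, a]
    push_cast
    linear_combination (- uh z 0 (xx n / (1 + 1 * xx n))) * hmul n hn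
  have e2 : (fun n => xx n * g (n - 1) - uh z (-1) (xx n)) =O[atTop] fun n => xx n ^ (k + 1) := by
    have h1 := hxO.mul (shift_sub he)
    have h2 := (xx_pow_le (show k + 1 ≤ 6 by omega)).mul (bigO_of_cont (fun x =>
      (3 * z ^ 4 / 16 * ((4 * (-1) + 3 * x) / (1 + (-1) * x) ^ 2)
        - 9 * z ^ 8 / 32 * ((6 + 8 * (-1) * x + 3 * x ^ 2) / (1 + (-1) * x) ^ 3)
        + 3 * z ^ 4 * (22 + 27 * z ^ 8) / 256 *
          ((4 * (-1) + 6 * x + 4 * (-1) * x ^ 2 + x ^ 3) / (1 + (-1) * x) ^ 4)))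
      (by fun_prop (disch := norm_num)))
    have h3 := (h1.congr_right (fun n => (pow_succ' (xx n) k).symm)).add
      (h2.congr_right (fun n => mul_one _))
    refine h3.congr' ?_ EventuallyEq.rfl
    filter_upwards [eventually_ge_atTop 2] with n hn
    have ⟨a, b⟩ := xx_pred n hn
    have := uh_shift z (-1) (by norm_num) (xx n) b
    rw [← this, a, Nat.cast_sub (by omega)]
    push_cast
    linear_combination (- uh z 0 (xx n / (1 + (-1) * xx n))) * hmul n hn
  have small : Tendsto (fun n => xx n ^ (k + 1)) atTop (nhds 0) := by
    simpa using xx_tendsto.pow (k + 1)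
  have lim : ∀ (s : ℝ) (f : ℕ → ℝ),
      ((fun n => f n - uh z s (xx n)) =O[atTop] fun n => xx n ^ (k + 1)) →
      Tendsto f atTop (nhds (1 / 2)) := by
    intro s f hf
    have h1 := hf.trans_tendsto small
    have h2 : Tendsto (fun n => uh z s (xx n)) atTop (nhds (uh z s 0)) := by
      have : ContinuousAt (uh z s) 0 := by unfold uh; fun_prop
      exact this.tendsto.comp xx_tendsto
    have h3 := h1.add h2
    have : uh z s 0 = 1 / 2 := by unfold uh; norm_num
    simpa [this] using h3
  have l0 := lim 0 _ e0
  have l1 := lim 1 _ e1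
  have l2 := lim (-1) _ e2
  set u : ℕ → ℝ := fun n => xx n * g n with hu
  set up : ℕ → ℝ := fun n => xx n * g (n + 1) with hup
  set um : ℕ → ℝ := fun n => xx n * g (n - 1) with hum
  have lab : Tendsto (fun n => (u n + up n) * (u n + um n)) atTop (nhds 1) := by
    have := (l0.add l1).mul (l0.add l2)
    norm_num at this
    exact this
  have labinv : (fun n => ((u n + up n) * (u n + um n))⁻¹) =O[atTop] fun _ => (1 : ℝ) :=
    (lab.inv₀ one_ne_zero).isBigO_one ℝ
  have o0 : u =O[atTop] fun _ => (1 : ℝ) := l0.isBigO_one ℝ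
  have o2 : um =O[atTop] fun _ => (1 : ℝ) := l2.isBigO_one ℝ
  have ouh : ∀ s, (fun n => uh z s (xx n)) =O[atTop] fun _ => (1 : ℝ) := fun s =>
    bigO_of_cont (uh z s) (by unfold uh; fun_prop)
  have ogh : ∀ s, (fun n => gh z s (xx n)) =O[atTop] fun _ => (1 : ℝ) := fun s =>
    bigO_of_cont (gh z s) (by unfold gh; fun_prop)
  have one_r : ∀ {f : ℕ → ℝ} {m : ℕ}, (f =O[atTop] fun n => xx n ^ m * 1) →
    f =O[atTop] fun n => xx n ^ m := fun h => h.congr_right (fun n => mul_one _)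
  -- error of γ
  have d0 : (fun n => γ n - gh z 0 (xx n)) =O[atTop] fun n => xx n ^ (k + 1) := by
    have t1 := one_r (e0.mul (o0.add (ouh 0)))
    have t2 := one_r ((e0.add e1).mul (o0.add o2))
    have t3 := one_r ((e0.add e2).mul ((ouh 0).add (ouh 1)))
    have t4 := one_r ((t2.add t3).mul (ogh 0))
    have t5 := one_r ((xx_pow_le (show k + 1 ≤ 5 by omega)).mul (bigO_of_cont (fun x => z ^ 2 * (
  (15 / 32) * z ^ 4 + (27 / 256) * z ^ 12 + (1 / 256) * x + (63 / 512) * x * z ^ 8 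
    + (-243 / 4096) * x * z ^ 16 + (87 / 512) * x ^ 2 * z ^ 4 + (81 / 512) * x ^ 2 * z ^ 12 
    + (243 / 2048) * x ^ 3 * z ^ 8 + (81 / 2048) * x ^ 3 * z ^ 16 + (81 / 2048) * x ^ 4 * z ^ 4 
    + (1323 / 8192) * x ^ 4 * z ^ 12 + (-729 / 16384) * x ^ 4 * z ^ 20 
    + (-2295 / 8192) * x ^ 5 * z ^ 8 + (-6561 / 32768) * x ^ 5 * z ^ 16 
    + (-6561 / 65536) * x ^ 5 * z ^ 24 + (-27 / 256) * x ^ 6 * z ^ 12 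
    + (-2673 / 16384) * x ^ 6 * z ^ 20 + (-5445 / 65536) * x ^ 7 * z ^ 8 
    + (-729 / 4096) * x ^ 7 * z ^ 16 + (-45927 / 262144) * x ^ 7 * z ^ 24 
    + (-15471 / 131072) * x ^ 8 * z ^ 12 + (-2187 / 16384) * x ^ 8 * z ^ 20 
    + (-59049 / 524288) * x ^ 8 * z ^ 28 + (-4761 / 262144) * x ^ 9 * z ^ 8 
    + (-139239 / 1048576) * x ^ 9 * z ^ 16 + (-19683 / 262144) * x ^ 9 * z ^ 24 
    + (-177147 / 4194304) * x ^ 9 * z ^ 32)) (by fun_prop)))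
    have t6 := one_r (((t5.add (t1.const_mul_left (z ^ 2))).sub t4).mul labinv)
    refine t6.congr' ?_ EventuallyEq.rfl
    filter_upwards [eventually_ge_atTop 5, lab.eventually_ne one_ne_zero] with n hn hne
    have h5 := res1 z (xx n)
    have hE' : z ^ 2 * u n ^ 2 = γ n * ((u n + up n) * (u n + um n)) := by
      simp only [hu, hup, hum]
      linear_combination (xx n) ^ 2 * hE n hn
    rw [← h5]
    rw [← div_eq_mul_inv, div_eq_iff hne]
    linear_combination hE'
  have d1 : (fun n => γ (n + 1) - gh z 1 (xx n)) =O[atTop] fun n => xx n ^ (k + 1) := by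
    have h2 := one_r ((xx_pow_le (show k + 1 ≤ 5 by omega)).mul (bigO_of_cont (fun x =>
      (z ^ 2 * (- 1 / 16 * ((4 * 1 + 3 * x) / (1 + 1 * x) ^ 2)
        + 3 * z ^ 4 / 32 * ((6 + 8 * 1 * x + 3 * x ^ 2) / (1 + 1 * x) ^ 3)
        - (1 / 64 + 27 * z ^ 8 / 256) *
          ((4 * 1 + 6 * x + 4 * 1 * x ^ 2 + x ^ 3) / (1 + 1 * x) ^ 4))))
      (by fun_prop (disch := norm_num))))
    refine ((shift_add d0).add h2).congr' ?_ EventuallyEq.rfl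
    filter_upwards [eventually_ge_atTop 2] with n hn
    have ⟨a, b⟩ := xx_succ n hn
    rw [← gh_shift z 1 (by norm_num) (xx n) b, a]
    ring
  have d2 : (fun n => γ (n - 1) - gh z (-1) (xx n)) =O[atTop] fun n => xx n ^ (k + 1) := by
    have h2 := one_r ((xx_pow_le (show k + 1 ≤ 5 by omega)).mul (bigO_of_cont (fun x =>
      (z ^ 2 * (- 1 / 16 * ((4 * (-1) + 3 * x) / (1 + (-1) * x) ^ 2)
        + 3 * z ^ 4 / 32 * ((6 + 8 * (-1) * x + 3 * x ^ 2) / (1 + (-1) * x) ^ 3)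
        - (1 / 64 + 27 * z ^ 8 / 256) *
          ((4 * (-1) + 6 * x + 4 * (-1) * x ^ 2 + x ^ 3) / (1 + (-1) * x) ^ 4))))
      (by fun_prop (disch := norm_num))))
    refine ((shift_sub d0).add h2).congr' ?_ EventuallyEq.rfl
    filter_upwards [eventually_ge_atTop 2] with n hn
    have ⟨a, b⟩ := xx_pred n hn
    rw [← gh_shift z (-1) (by norm_num) (xx n) b, a]
    ring
  have oγ : γ =O[atTop] fun _ => (1 : ℝ) := by
    have h1 := (d0.trans_tendsto small).isBigO_one ℝ
    simpa using h1.add (ogh 0)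
  -- conclusion
  have s1 := one_r (((d1.add d0).add d2).mul oγ)
  have s2 := one_r (d0.mul (((ogh 1).add (ogh 0)).add (ogh (-1))))
  have s3 := one_r ((xx_pow_le (show k + 1 ≤ 5 by omega)).mul (bigO_of_cont (fun x =>
  (9 / 128) * z ^ 8 + (15 / 256) * x * z ^ 4 + (135 / 1024) * x * z ^ 12 
    + (45 / 512) * x ^ 2 * z ^ 8 + (243 / 2048) * x ^ 2 * z ^ 16 + (27 / 2048) * x ^ 3 * z ^ 4 
    + (405 / 4096) * x ^ 3 * z ^ 12 + (2187 / 32768) * x ^ 3 * z ^ 20) (by fun_prop)))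
  refine (((s1.add s2).const_mul_left (-2)).sub s3).congr' ?_ EventuallyEq.rfl
  filter_upwards [eventually_ge_atTop 2] with n hn
  have h6 := res2 z (xx n)
  have hx := hmul n hn
  rw [hg n (by omega)]
  have h7 : xx n ^ 5 * (
  (9 / 128) * z ^ 8 + (15 / 256) * xx n * z ^ 4 + (135 / 1024) * xx n * z ^ 12 
    + (45 / 512) * xx n ^ 2 * z ^ 8 + (243 / 2048) * xx n ^ 2 * z ^ 16 + (27 / 2048) * xx n ^ 3 * z ^ 4 
    + (405 / 4096) * xx n ^ 3 * z ^ 12 + (2187 / 32768) * xx n ^ 3 * z ^ 20) = n * (uh z 0 (xx n) - 1 / 2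
    + 2 * xx n * (gh z 0 (xx n) * (gh z 1 (xx n) + gh z 0 (xx n) + gh z (-1) (xx n)))) := by
    rw [h6]
    linear_combination (-(xx n ^ 5 * (
  (9 / 128) * z ^ 8 + (15 / 256) * xx n * z ^ 4 + (135 / 1024) * xx n * z ^ 12 
    + (45 / 512) * xx n ^ 2 * z ^ 8 + (243 / 2048) * xx n ^ 2 * z ^ 16 + (27 / 2048) * xx n ^ 3 * z ^ 4 
    + (405 / 4096) * xx n ^ 3 * z ^ 12 + (2187 / 32768) * xx n ^ 3 * z ^ 20))) * hx
  rw [h7]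
  linear_combination (-2 * (gh z 0 (xx n) * (gh z 1 (xx n) + gh z 0 (xx n) + gh z (-1) (xx n)))) * hx

lemma asym (z : ℝ) (γ g : ℕ → ℝ) (hγb : ∀ n, |γ n| ≤ z ^ 2)
    (hg : ∀ n, 1 ≤ n → g n = (n : ℝ) / 2 - 2 * γ n * (γ (n + 1) + γ n + γ (n - 1)))
    (hE : ∀ n, 5 ≤ n → z ^ 2 * g n ^ 2 = γ n * ((g n + g (n + 1)) * (g n + g (n - 1)))) :
    (fun n => g n - n * uh z 0 (xx n)) =O[atTop] fun n => xx n ^ 5 := by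
  have h0 : (fun n => g n - n * uh z 0 (xx n)) =O[atTop] fun n => xx n ^ 0 := by
    have b : ∀ σ : ℕ → ℕ, (fun n => γ (σ n)) =O[atTop] fun _ : ℕ => (1 : ℝ) := fun σ =>
      IsBigO.of_bound (z ^ 2) (Eventually.of_forall fun n => by simpa using hγb (σ n))
    have h1 := ((b id).mul (((b (· + 1)).add (b id)).add (b (· - 1)))).const_mul_left (-2)
    have h2 := bigO_of_cont (fun x => 3 * z ^ 4 / 8 + 3 * z ^ 4 / 16 * x ^ 2
      + 9 * z ^ 8 / 32 * x ^ 3 + 3 * z ^ 4 * (22 + 27 * z ^ 8) / 256 * x ^ 4) (by fun_prop)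
    simp only [mul_one] at h1
    refine (h1.add h2).congr' ?_ (Eventually.of_forall fun n => by simp)
    filter_upwards [eventually_ge_atTop 1] with n hn
    have : (n : ℝ) ≠ 0 := by positivity
    rw [hg n hn]
    simp only [id, uh, xx]
    field_simp
    ring
  have h1 := step z γ g 0 (by norm_num) hg hE h0
  have h2 := step z γ g 1 (by norm_num) hg hE h1
  have h3 := step z γ g 2 (by norm_num) hg hE h2
  have h4 := step z γ g 3 (by norm_num) hg hE h3
  exact step z γ g 4 (by norm_num) hg hE h4

open Polynomial in
/-- the linear functional of the weight -/
noncomputable def LL (z : ℝ) (p : ℝ[X]) : ℝ := ∫ x in (-z)..z, p.eval x * Real.exp (-x ^ 4)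

section
open Polynomial

lemma LL_int (z : ℝ) (p : ℝ[X]) (a b : ℝ) :
    IntervalIntegrable (fun x => p.eval x * Real.exp (-x ^ 4)) MeasureTheory.volume a b :=
  Continuous.intervalIntegrable (by fun_prop) _ _

lemma LL_add (z : ℝ) (p q : ℝ[X]) : LL z (p + q) = LL z p + LL z q := by
  unfold LL
  rw [← intervalIntegral.integral_add (LL_int z p _ _) (LL_int z q _ _)]
  simp only [eval_add, add_mul]

lemma LL_C (z c : ℝ) (p : ℝ[X]) : LL z (C c * p) = c * LL z p := by
  unfold LL
  rw [← intervalIntegral.integral_const_mul]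
  simp only [eval_mul, eval_C, mul_assoc]

lemma LL_sub (z : ℝ) (p q : ℝ[X]) : LL z (p - q) = LL z p - LL z q := by
  have : p - q = p + C (-1) * q := by simp [sub_eq_add_neg]
  rw [this, LL_add, LL_C]
  ring

lemma LL_ibp (z : ℝ) (p : ℝ[X]) : LL z (derivative p) =
    (p.eval z - p.eval (-z)) * Real.exp (-z ^ 4) + 4 * LL z (X ^ 3 * p) := by
  have hd : ∀ x : ℝ, HasDerivAt (fun x => p.eval x * Real.exp (-x ^ 4))
      ((derivative p - C 4 * (X ^ 3 * p)).eval x * Real.exp (-x ^ 4)) x := by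
    intro x
    have h1 := p.hasDerivAt x
    have h2 : HasDerivAt (fun x : ℝ => Real.exp (-x ^ 4)) (Real.exp (-x ^ 4) * (-(4 * x ^ 3))) x := by
      have := ((hasDerivAt_pow 4 x).neg).exp
      simpa using this
    refine (h1.mul h2).congr_deriv ?_
    simp
    ring
  have h := intervalIntegral.integral_eq_sub_of_hasDerivAt (a := -z) (b := z)
    (fun x _ => hd x) (LL_int z _ _ _)
  change LL z _ = _ at h
  rw [LL_sub, LL_C] at h
  have : (-(-z) ^ 4 : ℝ) = -z ^ 4 := by ring
  rw [this] at h
  linear_combination h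

variable {z : ℝ} {P : ℕ → ℝ[X]} {γ h : ℕ → ℝ}

lemma orth_lt (hmonic : ∀ n, (P n).Monic) (hdeg : ∀ n, (P n).natDegree = n)
    (ho : ∀ m n, m ≠ n → LL z (P m * P n) = 0) (n : ℕ) :
    ∀ d, d ≤ n → ∀ q : ℝ[X], q.degree < d → LL z (q * P n) = 0 := by
  intro d
  induction d with
  | zero =>
    intro _ q hq
    have : q = 0 := by
      rw [← Polynomial.degree_eq_bot]
      exact Nat.WithBot.lt_zero_iff.mp (by simpa using hq)
    subst this
    simp [LL]
  | succ d ih =>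
    intro hd q hq
    have e : q = (q - C (q.coeff d) * P d) + C (q.coeff d) * P d := by ring
    have h1 : (q - C (q.coeff d) * P d).degree < d := by
      rw [Polynomial.degree_lt_iff_coeff_zero]
      intro m hm
      rcases Nat.eq_or_lt_of_le hm with rfl | hm
      · have : (P d).coeff d = 1 := by
          have := (hmonic d).coeff_natDegree
          rwa [hdeg] at this
        simp [this]
      · have a1 : q.coeff m = 0 := by
          rw [Polynomial.degree_lt_iff_coeff_zero] at hq
          exact hq m hm
        have a2 : (P d).coeff m = 0 := coeff_eq_zero_of_natDegree_lt (by rw [hdeg]; exact hm)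
        simp [a1, a2]
    rw [e, add_mul, LL_add, ih (by omega) _ h1, mul_assoc, LL_C, ho d n (by omega)]
    simp

lemma orth_le (hmonic : ∀ n, (P n).Monic) (hdeg : ∀ n, (P n).natDegree = n)
    (ho : ∀ m n, m ≠ n → LL z (P m * P n) = 0) (n : ℕ) (q : ℝ[X]) (hq : q.natDegree ≤ n) :
    LL z (q * P n) = q.coeff n * LL z (P n * P n) := by
  have e : q = (q - C (q.coeff n) * P n) + C (q.coeff n) * P n := by ring
  have h1 : (q - C (q.coeff n) * P n).degree < n := by
    rw [Polynomial.degree_lt_iff_coeff_zero]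
    intro m hm
    rcases Nat.eq_or_lt_of_le hm with rfl | hm
    · have : (P n).coeff n = 1 := by
        have := (hmonic n).coeff_natDegree
        rwa [hdeg] at this
      simp [this]
    · have a1 : q.coeff m = 0 := coeff_eq_zero_of_natDegree_lt (by omega)
      have a2 : (P n).coeff m = 0 := coeff_eq_zero_of_natDegree_lt (by rw [hdeg]; exact hm)
      simp [a1, a2]
  have h2 := orth_lt hmonic hdeg ho n n le_rfl _ h1
  conv_lhs => rw [e, add_mul, LL_add, h2, mul_assoc, LL_C]
  ring

lemma parity (hP0 : P 0 = 1) (hP1 : P 1 = X)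
    (hrec : ∀ n, X * P (n + 1) = P (n + 2) + C (γ (n + 1)) * P n) (x : ℝ) :
    ∀ n, (P n).eval (-x) = (-1) ^ n * (P n).eval x ∧
      (P (n + 1)).eval (-x) = (-1) ^ (n + 1) * (P (n + 1)).eval x := by
  intro n
  induction n with
  | zero => simp [hP0, hP1]
  | succ n ih =>
    refine ⟨ih.2, ?_⟩
    have h1 := congrArg (Polynomial.eval (-x)) (hrec n)
    have h2 := congrArg (Polynomial.eval x) (hrec n)
    simp only [eval_mul, eval_add, eval_X, eval_C] at h1 h2
    rw [ih.1, ih.2] at h1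
    rw [show n + 1 + 1 = n + 2 from rfl, pow_add]
    rw [pow_succ] at h1
    linear_combination (-1) * h1 + (-1) ^ n * h2

/-- `g_n` as a boundary term -/
lemma g_boundary (hmonic : ∀ n, (P n).Monic) (hdeg : ∀ n, (P n).natDegree = n)
    (ho : ∀ m n, m ≠ n → LL z (P m * P n) = 0)
    (hh : ∀ n, h n = LL z (P n * P n)) (hhpos : ∀ n, 0 < h n)
    (hP0 : P 0 = 1) (hP1 : P 1 = X)
    (hrec : ∀ n, X * P (n + 1) = P (n + 2) + C (γ (n + 1)) * P n)
    (hγ : ∀ n, γ (n + 1) = h (n + 1) / h n) (m : ℕ) :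
    ((m + 3 : ℕ) : ℝ) / 2 - 2 * γ (m + 3) * (γ (m + 4) + γ (m + 3) + γ (m + 2)) =
      (P (m + 3)).eval z * (P (m + 2)).eval z * Real.exp (-z ^ 4) / h (m + 2) := by
  have ibp := LL_ibp z (P (m + 3) * P (m + 2))
  -- left side
  have l1 : LL z (derivative (P (m + 3) * P (m + 2))) = ((m + 3 : ℕ) : ℝ) * h (m + 2) := by
    rw [derivative_mul, LL_add, orth_le hmonic hdeg ho (m + 2) (derivative (P (m + 3)))]
    · rw [mul_comm (P (m + 3)), orth_lt hmonic hdeg ho (m + 3) (m + 3) le_rfl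
        (derivative (P (m + 2)))]
      · have : (P (m + 3)).coeff (m + 3) = 1 := by
          have := (hmonic (m + 3)).coeff_natDegree
          rwa [hdeg] at this
        rw [coeff_derivative, show m + 2 + 1 = m + 3 from rfl, this, ← hh]
        push_cast
        ring
      · refine lt_of_le_of_lt (degree_le_natDegree) ?_
        have := natDegree_derivative_le (P (m + 2))
        rw [hdeg] at this
        exact_mod_cast (by omega)
    · have := natDegree_derivative_le (P (m + 3))
      rw [hdeg] at this
      omega
  -- right side
  have l2 : LL z (X ^ 3 * (P (m + 3) * P (m + 2))) =
      h (m + 3) * (γ (m + 4) + γ (m + 3) + γ (m + 2)) := by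
    have e : X ^ 3 * (P (m + 3) * P (m + 2)) =
        P (m + 5) * P (m + 3) + C (γ (m + 2)) * (P (m + 5) * P (m + 1))
        + C (γ (m + 4) + γ (m + 3)) * (P (m + 3) * P (m + 3))
        + C ((γ (m + 4) + γ (m + 3)) * γ (m + 2)) * (P (m + 3) * P (m + 1))
        + C (γ (m + 3) * γ (m + 2)) * (P (m + 1) * P (m + 3))
        + C (γ (m + 3) * γ (m + 2) * γ (m + 2)) * (P (m + 1) * P (m + 1)) := by
      have r1 := hrec (m + 3)
      have r2 := hrec (m + 2)
      have r3 := hrec (m + 1)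
      simp only [C_add, C_mul]
      simp only [show m + 3 + 1 = m + 4 from rfl, show m + 3 + 2 = m + 5 from rfl,
        show m + 2 + 1 = m + 3 from rfl, show m + 2 + 2 = m + 4 from rfl,
        show m + 1 + 1 = m + 2 from rfl, show m + 1 + 2 = m + 3 from rfl] at r1 r2 r3
      have r4 : X ^ 2 * P (m + 3) = P (m + 5) + (C (γ (m + 4)) + C (γ (m + 3))) * P (m + 3)
          + C (γ (m + 3)) * C (γ (m + 2)) * P (m + 1) := by
        linear_combination X * r2 + r1 + C (γ (m + 3)) * r3
      have : X ^ 3 * (P (m + 3) * P (m + 2)) = (X ^ 2 * P (m + 3)) * (X * P (m + 2)) := by ring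
      rw [this, r4, r3]
      ring
    rw [e]
    simp only [LL_add, LL_C]
    rw [ho (m + 5) (m + 3) (by omega), ho (m + 5) (m + 1) (by omega),
      ho (m + 3) (m + 1) (by omega), ho (m + 1) (m + 3) (by omega), ← hh, ← hh]
    have a := hγ (m + 2)
    have b := hγ (m + 1)
    have p1 := (hhpos (m + 1)).ne'
    have p2 := (hhpos (m + 2)).ne'
    simp only [show m + 2 + 1 = m + 3 from rfl, show m + 1 + 1 = m + 2 from rfl] at a b
    have : γ (m + 3) * γ (m + 2) * h (m + 1) = h (m + 3) := by
      rw [a, b]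
      field_simp
    linear_combination γ (m + 2) * this
  have pz := (parity hP0 hP1 hrec z (m + 2))
  rw [l1, l2, eval_mul, eval_mul, pz.1, pz.2] at ibp
  have sg : (-1 : ℝ) ^ (m + 2 + 1) * (-1) ^ (m + 2) = -1 := by
    rw [← pow_add]
    exact Odd.neg_one_pow ⟨m + 2, by ring⟩
  have a := hγ (m + 2)
  have p2 := (hhpos (m + 2)).ne'
  simp only [show m + 2 + 1 = m + 3 from rfl] at a ibp sg
  have a' : h (m + 3) = γ (m + 3) * h (m + 2) := by rw [a]; field_simp
  rw [eq_div_iff p2]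
  rw [a'] at ibp
  linear_combination ibp / 2 - (P (m + 3)).eval z * (P (m + 2)).eval z * Real.exp (-z ^ 4) / 2 * sg

lemma gamma_le (hz : 0 < z) (ho : ∀ m n, m ≠ n → LL z (P m * P n) = 0)
    (hh : ∀ n, h n = LL z (P n * P n)) (hhpos : ∀ n, 0 < h n)
    (hP0 : P 0 = 1) (hP1 : P 1 = X)
    (hrec : ∀ n, X * P (n + 1) = P (n + 2) + C (γ (n + 1)) * P n)
    (hγ0 : γ 0 = 0)
    (hγ : ∀ n, γ (n + 1) = h (n + 1) / h n) (n : ℕ) : |γ n| ≤ z ^ 2 := by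
  have key : ∀ p : ℝ[X], LL z ((X * p) * (X * p)) ≤ z ^ 2 * LL z (p * p) := by
    intro p
    rw [← LL_C]
    refine intervalIntegral.integral_mono_on (by linarith) (LL_int z _ _ _) (LL_int z _ _ _) ?_
    intro x hx
    simp only [eval_mul, eval_X, eval_C]
    refine mul_le_mul_of_nonneg_right ?_ (Real.exp_pos _).le
    have : x ^ 2 ≤ z ^ 2 := sq_le_sq' hx.1 hx.2
    nlinarith [mul_le_mul_of_nonneg_right this (mul_self_nonneg (p.eval x))]
  rcases n with _ | n
  · rw [hγ0]
    simp [sq_nonneg]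
  rw [hγ, abs_of_pos (div_pos (hhpos _) (hhpos _)), div_le_iff₀ (hhpos _)]
  rcases n with _ | n
  · have := key (P 0)
    rw [← hh] at this
    rw [hh 1, hP1]
    simpa [hP0] using this
  · have := key (P (n + 1))
    rw [← hh, hrec] at this
    have e : (P (n + 2) + C (γ (n + 1)) * P n) * (P (n + 2) + C (γ (n + 1)) * P n) =
      P (n + 2) * P (n + 2) + C (2 * γ (n + 1)) * (P (n + 2) * P n)
        + C (γ (n + 1) ^ 2) * (P n * P n) := by
      simp only [C_mul, C_pow, show (C 2 : ℝ[X]) = 2 from rfl]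
      ring
    rw [e, LL_add, LL_add, LL_C, LL_C, ho (n + 2) n (by omega), ← hh, ← hh] at this
    have := mul_nonneg (sq_nonneg (γ (n + 1))) (hhpos n).le
    rw [show n + 1 + 1 = n + 2 from rfl]
    linarith

end

end TF

/-- Asymptotic expansion of `g_n(z) = n/2 - 2γ_n(γ_{n+1}+γ_n+γ_{n-1})` as `n → ∞`:
`g_n = n/2 - 3z⁴/8 - (3z⁴/16)n⁻² - (9z⁸/32)n⁻³ - (3z⁴(22+27z⁸)/256)n⁻⁴ + O(n⁻⁵)`. -/
theorem truncated_freud_gn_asymptotics (z : ℝ) (hz : 0 < z)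
    (P : ℕ → Polynomial ℝ) (γ h : ℕ → ℝ)
    (hmonic : ∀ n, (P n).Monic)
    (hdeg : ∀ n, (P n).natDegree = n)
    (horth : ∀ m n, m ≠ n →
      ∫ x in (-z)..z, (P m).eval x * (P n).eval x * Real.exp (-x ^ 4) = 0)
    (hh : ∀ n, h n = ∫ x in (-z)..z, ((P n).eval x) ^ 2 * Real.exp (-x ^ 4))
    (hhpos : ∀ n, 0 < h n)
    (hP0 : P 0 = 1) (hP1 : P 1 = Polynomial.X)
    (hrec : ∀ n, Polynomial.X * P (n + 1) = P (n + 2) + Polynomial.C (γ (n + 1)) * P n)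
    (hγ0 : γ 0 = 0)
    (hγ : ∀ n, γ (n + 1) = h (n + 1) / h n)
    (g : ℕ → ℝ)
    (hg : ∀ n, 1 ≤ n → g n = (n : ℝ) / 2 - 2 * γ n * (γ (n + 1) + γ n + γ (n - 1))) :
    (fun n : ℕ => g n -
        ((n : ℝ) / 2 - 3 * z ^ 4 / 8 - (3 * z ^ 4 / 16) / (n : ℝ) ^ 2
          - (9 * z ^ 8 / 32) / (n : ℝ) ^ 3
          - (3 * z ^ 4 * (22 + 27 * z ^ 8) / 256) / (n : ℝ) ^ 4))
      =O[atTop] fun n : ℕ => 1 / (n : ℝ) ^ 5 := by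
  have hw : ∀ p q : Polynomial ℝ, TF.LL z (p * q) =
      ∫ x in (-z)..z, p.eval x * q.eval x * Real.exp (-x ^ 4) := by
    intro p q
    simp only [TF.LL, Polynomial.eval_mul]
  have ho : ∀ m n, m ≠ n → TF.LL z (P m * P n) = 0 := by
    intro m n hmn
    rw [hw]
    exact horth m n hmn
  have hh' : ∀ n, h n = TF.LL z (P n * P n) := by
    intro n
    rw [hw, hh]
    simp only [sq]
  have hb := TF.gamma_le hz ho hh' hhpos hP0 hP1 hrec hγ0 hγ
  have gb := TF.g_boundary hmonic hdeg ho hh' hhpos hP0 hP1 hrec hγ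
  have gb' : ∀ m, g (m + 3) =
      (P (m + 3)).eval z * (P (m + 2)).eval z * Real.exp (-z ^ 4) / h (m + 2) := by
    intro m
    rw [← gb m, hg (m + 3) (by omega)]
    rfl
  have hE : ∀ n, 5 ≤ n →
      z ^ 2 * g n ^ 2 = γ n * ((g n + g (n + 1)) * (g n + g (n - 1))) := by
    intro n hn
    obtain ⟨m, rfl⟩ := Nat.exists_eq_add_of_le' (show 4 ≤ n by omega)
    rw [show m + 4 - 1 = m + 3 from rfl, gb' m, gb' (m + 1), show m + 4 + 1 = m + 2 + 3 by ring,
      gb' (m + 2)]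
    have r1 := congrArg (Polynomial.eval z) (hrec (m + 3))
    have r2 := congrArg (Polynomial.eval z) (hrec (m + 2))
    simp only [Polynomial.eval_mul, Polynomial.eval_add, Polynomial.eval_X, Polynomial.eval_C,
      hγ] at r1 r2
    rw [hγ (m + 3)]
    simp only [show m + 1 + 3 = m + 4 from rfl, show m + 1 + 2 = m + 3 from rfl,
      show m + 2 + 2 = m + 4 from rfl, show m + 2 + 3 = m + 5 from rfl,
      show m + 3 + 1 = m + 4 from rfl, show m + 3 + 2 = m + 5 from rfl,
      show m + 2 + 1 = m + 3 from rfl] at r1 r2 ⊢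
    have p2 := (hhpos (m + 2)).ne'
    have p3 := (hhpos (m + 3)).ne'
    have p4 := (hhpos (m + 4)).ne'
    rw [← sub_eq_iff_eq_add] at r1 r2
    rw [← r1, ← r2]
    field_simp
    ring
  have main := TF.asym z γ g hb hg hE
  refine main.congr' ?_ (Eventually.of_forall fun n => by simp [TF.xx])
  filter_upwards [eventually_ge_atTop 1] with n hn
  have : (n : ℝ) ≠ 0 := by positivity
  simp only [TF.uh, TF.xx]
  field_simp
  ring
end

section
/- For every n ≥ 0, the even moments u_{2n}(z) = ∫_{−z}^{z} x^{2n} e^{−x⁴} dx, viewed as functions of z > 0, satisfy the differential-recurrence relations z·u′_{2n}(z) = (2n+1)·u_{2n}(z) − 4·u_{2n+4}(z) and u′_{2n+2}(z) = z²·u′_{2n}(z) for all z > 0, where ′ denotes the derivative with respect to z. -/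
theorem freud_hasDerivAt_even (k : ℕ) (u : ℕ → ℝ → ℝ)
    (hu : ∀ m z, u m z = ∫ x in (-z)..z, x ^ m * Real.exp (-x ^ 4)) (z : ℝ) :
    deriv (u (2 * k)) z = 2 * (z ^ (2 * k) * Real.exp (-z ^ 4)) := by
  have hc : Continuous (fun x : ℝ => x ^ (2 * k) * Real.exp (-x ^ 4)) := by fun_prop
  have hI : ∀ y : ℝ, HasDerivAt (fun w => ∫ x in (0 : ℝ)..w, x ^ (2 * k) * Real.exp (-x ^ 4))
      (y ^ (2 * k) * Real.exp (-y ^ 4)) y := fun y =>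
    intervalIntegral.integral_hasDerivAt_right (hc.intervalIntegrable _ _)
      hc.stronglyMeasurable.stronglyMeasurableAtFilter hc.continuousAt
  have hfun : u (2 * k) = fun w => (∫ x in (0 : ℝ)..w, x ^ (2 * k) * Real.exp (-x ^ 4))
      - ∫ x in (0 : ℝ)..(-w), x ^ (2 * k) * Real.exp (-x ^ 4) := by
    funext w
    rw [hu, intervalIntegral.integral_interval_sub_left (hc.intervalIntegrable _ _)
      (hc.intervalIntegrable _ _)]
  have h2 := (hI z).sub ((hI (-z)).comp z (hasDerivAt_neg z))
  rw [hfun]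
  refine h2.deriv.trans ?_
  have e1 : (-z) ^ (2 * k) = z ^ (2 * k) := (even_two_mul k).neg_pow z
  have e2 : (-z) ^ 4 = z ^ 4 := by ring
  rw [e1, e2]
  ring

/-- The even moments `u_{2n}(z) = ∫_{-z}^{z} x^{2n} e^{-x⁴} dx`, as functions of
`z > 0`, satisfy `z·u'_{2n}(z) = (2n+1)·u_{2n}(z) - 4·u_{2n+4}(z)` and
`u'_{2n+2}(z) = z²·u'_{2n}(z)`. -/
theorem truncated_freud_moment_differential_recurrence (n : ℕ) (u : ℕ → ℝ → ℝ)
    (hu : ∀ m z, u m z = ∫ x in (-z)..z, x ^ m * Real.exp (-x ^ 4)) :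
    ∀ z : ℝ, 0 < z →
      z * deriv (u (2 * n)) z = (2 * (n : ℝ) + 1) * u (2 * n) z - 4 * u (2 * n + 4) z
      ∧ deriv (u (2 * n + 2)) z = z ^ 2 * deriv (u (2 * n)) z := by
  intro z _
  have hd := freud_hasDerivAt_even n u hu z
  have hd' := freud_hasDerivAt_even (n + 1) u hu z
  refine ⟨?_, ?_⟩
  · have hF : ∀ x : ℝ, HasDerivAt (fun y : ℝ => y ^ (2 * n + 1) * Real.exp (-y ^ 4))
        ((2 * (n : ℝ) + 1) * (x ^ (2 * n) * Real.exp (-x ^ 4))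
          - 4 * (x ^ (2 * n + 4) * Real.exp (-x ^ 4))) x := by
      intro x
      have h := (hasDerivAt_pow (2 * n + 1) x).mul ((hasDerivAt_pow 4 x).neg.exp)
      refine h.congr_deriv ?_
      simp
      ring
    have hc : ∀ m : ℕ, Continuous (fun x : ℝ => x ^ m * Real.exp (-x ^ 4)) := by
      intro m; fun_prop
    have hint := intervalIntegral.integral_eq_sub_of_hasDerivAt (a := -z) (b := z)
      (fun x _ => hF x)
      ((((hc (2 * n)).const_mul _).sub ((hc (2 * n + 4)).const_mul _)).intervalIntegrable _ _)
    rw [intervalIntegral.integral_sub (((hc (2 * n)).const_mul _).intervalIntegrable _ _)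
      (((hc (2 * n + 4)).const_mul _).intervalIntegrable _ _),
      intervalIntegral.integral_const_mul, intervalIntegral.integral_const_mul,
      ← hu, ← hu] at hint
    have e1 : (-z) ^ (2 * n + 1) = -z ^ (2 * n + 1) := (odd_two_mul_add_one n).neg_pow z
    have e2 : (-z) ^ 4 = z ^ 4 := by ring
    rw [hint, hd, e1, e2]
    ring
  · rw [show 2 * n + 2 = 2 * (n + 1) by ring, hd', hd]
    ring
end

section
/- For z > 0, let P_n(·; z) denote the monic orthogonal polynomials for the weight e^{−x⁴} on [−z, z], with h_n(z) = ∫_{−z}^{z} P_n(x; z)² e^{−x⁴} dx and recurrence coefficients γ_n(z), and assume the coefficients of each P_n(·; z) are differentiable functions of z. Then for every n ≥ 2 the Toda-type equations hold: z·h′_n(z)/h_n(z) = (2n+1) − 4·[ γ_n·(γ_{n+1} + γ_n + γ_{n−1}) + γ_{n+1}·(γ_{n+2} + γ_{n+1} + γ_n) ] and z·γ′_n(z)/γ_n(z) = 4·[ γ_{n−1}·(γ_n + γ_{n−1} + γ_{n−2}) − γ_{n+1}·(γ_{n+2} + γ_{n+1} + γ_n) + 1/2 ], where ′ denotes the derivative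 with respect to z. -/
open Polynomial in
/-- The moment functional on `[-w, w]`. -/
noncomputable def momL (w : ℝ) (p : Polynomial ℝ) : ℝ :=
  ∫ x in (-w)..w, p.eval x * Real.exp (-x ^ 4)

lemma momL_integrable (a b : ℝ) (p : Polynomial ℝ) :
    IntervalIntegrable (fun x => p.eval x * Real.exp (-x ^ 4)) MeasureTheory.volume a b := by
  apply Continuous.intervalIntegrable
  have := p.continuous
  fun_prop

lemma momL_add (w : ℝ) (p q : Polynomial ℝ) : momL w (p + q) = momL w p + momL w q := by
  unfold momL
  rw [← intervalIntegral.integral_add (momL_integrable _ _ p) (momL_integrable _ _ q)]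
  congr 1; ext x; rw [Polynomial.eval_add]; ring

lemma momL_C_mul (w c : ℝ) (p : Polynomial ℝ) :
    momL w (Polynomial.C c * p) = c * momL w p := by
  unfold momL
  rw [← intervalIntegral.integral_const_mul]
  congr 1; ext x; rw [Polynomial.eval_mul, Polynomial.eval_C]; ring

lemma momL_zero (w : ℝ) : momL w 0 = 0 := by simp [momL]

lemma momL_sum (w : ℝ) {ι : Type*} (s : Finset ι) (f : ι → Polynomial ℝ) :
    momL w (∑ i ∈ s, f i) = ∑ i ∈ s, momL w (f i) := by
  classical
  induction s using Finset.induction_on with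
  | empty => simp [momL_zero]
  | insert a s ha ih => rw [Finset.sum_insert ha, Finset.sum_insert ha, momL_add, ih]

lemma momL_hasDerivAt (z : ℝ) (p : Polynomial ℝ) :
    HasDerivAt (fun w => momL w p)
      (p.eval z * Real.exp (-z ^ 4) + p.eval (-z) * Real.exp (-z ^ 4)) z := by
  have hc : Continuous (fun x => p.eval x * Real.exp (-x ^ 4)) := by
    have := p.continuous
    fun_prop
  have hF : ∀ t, HasDerivAt (fun u => ∫ x in (0:ℝ)..u, p.eval x * Real.exp (-x ^ 4))
      (p.eval t * Real.exp (-t ^ 4)) t := fun t =>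
    intervalIntegral.integral_hasDerivAt_right (momL_integrable _ _ p)
      (hc.stronglyMeasurableAtFilter _ _) hc.continuousAt
  have h2 := (hF (-z)).comp z (hasDerivAt_neg z)
  have h3 := (hF z).sub h2
  have e : (fun w => momL w p) = (fun u => ∫ x in (0:ℝ)..u, p.eval x * Real.exp (-x ^ 4)) -
      ((fun u => ∫ x in (0:ℝ)..u, p.eval x * Real.exp (-x ^ 4)) ∘ Neg.neg) := by
    ext w
    simp only [momL, Pi.sub_apply, Function.comp]
    rw [intervalIntegral.integral_interval_sub_left (momL_integrable _ _ p)
      (momL_integrable _ _ p)]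
  rw [e]
  refine h3.congr_deriv ?_
  have : (-z) ^ 4 = z ^ 4 := by ring
  rw [this]; ring

/-- Integration by parts. -/
lemma momL_ibp (z : ℝ) (p : Polynomial ℝ) :
    p.eval z * Real.exp (-z ^ 4) - p.eval (-z) * Real.exp (-z ^ 4)
      = momL z (Polynomial.derivative p + Polynomial.C (-4) * (Polynomial.X ^ 3 * p)) := by
  have hd : ∀ x, HasDerivAt (fun x => p.eval x * Real.exp (-x ^ 4))
      ((Polynomial.derivative p + Polynomial.C (-4) * (Polynomial.X ^ 3 * p)).eval x
        * Real.exp (-x ^ 4)) x := by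
    intro x
    have h1 := (p.hasDerivAt x).mul (((hasDerivAt_pow 4 x).neg).exp)
    refine h1.congr_deriv ?_
    simp
    ring
  have := intervalIntegral.integral_eq_sub_of_hasDerivAt (a := -z) (b := z)
    (fun x _ => hd x) (momL_integrable _ _ _)
  unfold momL
  rw [this]
  have : (-z) ^ 4 = z ^ 4 := by ring
  rw [this]

section orth
open Polynomial

lemma orth_lt (w : ℝ) (p : ℕ → Polynomial ℝ) (hm : ∀ n, (p n).Monic)
    (hd : ∀ n, (p n).natDegree = n) (ho : ∀ m n, m ≠ n → momL w (p m * p n) = 0) (n : ℕ) :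
    ∀ m, m ≤ n → ∀ q : Polynomial ℝ, q.degree < m → momL w (p n * q) = 0 := by
  intro m
  induction m with
  | zero =>
    intro _ q hq
    have : q = 0 := by
      rw [← Polynomial.degree_eq_bot]
      exact Nat.WithBot.lt_zero_iff.mp (by exact_mod_cast hq)
    rw [this, mul_zero, momL_zero]
  | succ m ih =>
    intro hmn q hq
    have hlt : (q + C (-(q.coeff m)) * p m).degree < m := by
      rw [Polynomial.degree_lt_iff_coeff_zero] at hq ⊢
      intro j hj
      rw [coeff_add, coeff_C_mul]
      rcases hj.eq_or_lt with rfl | hj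
      · have : (p m).coeff m = 1 := by
          have := hm m
          rwa [Monic, leadingCoeff, hd] at this
        rw [this]; ring
      · rw [hq j hj, coeff_eq_zero_of_natDegree_lt (p := p m) (by rw [hd]; exact hj)]; ring
    have h1 := ih (by omega) _ hlt
    have e : p n * (q + C (-(q.coeff m)) * p m) =
      p n * q + C (-(q.coeff m)) * (p n * p m) := by ring
    rw [e, momL_add, momL_C_mul, ho n m (by omega)] at h1
    linarith

lemma orth_eq (w : ℝ) (p : ℕ → Polynomial ℝ) (hm : ∀ n, (p n).Monic)
    (hd : ∀ n, (p n).natDegree = n) (ho : ∀ m n, m ≠ n → momL w (p m * p n) = 0) (n : ℕ)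
    (q : Polynomial ℝ) (hq : q.natDegree ≤ n) :
    momL w (p n * q) = q.coeff n * momL w (p n * p n) := by
  have hlt : (q + C (-(q.coeff n)) * p n).degree < n := by
    rw [Polynomial.degree_lt_iff_coeff_zero]
    intro j hj
    rw [coeff_add, coeff_C_mul]
    rcases hj.eq_or_lt with rfl | hj
    · have : (p n).coeff n = 1 := by
        have := hm n
        rwa [Monic, leadingCoeff, hd] at this
      rw [this]; ring
    · rw [coeff_eq_zero_of_natDegree_lt (hq.trans_lt hj),
        coeff_eq_zero_of_natDegree_lt (p := p n) (by rw [hd]; exact hj)]; ring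
  have h1 := orth_lt w p hm hd ho n n le_rfl _ hlt
  have e : p n * (q + C (-(q.coeff n)) * p n) =
      p n * q + C (-(q.coeff n)) * (p n * p n) := by ring
  rw [e, momL_add, momL_C_mul] at h1
  linarith

/-- Boundary term identity at a fixed `z`. -/
lemma boundary (z : ℝ) (p : ℕ → Polynomial ℝ) (g : ℕ → ℝ) (hm : ∀ n, (p n).Monic)
    (hd : ∀ n, (p n).natDegree = n) (ho : ∀ m n, m ≠ n → momL z (p m * p n) = 0)
    (h01 : X * p 0 = p 1) (hr : ∀ n, X * p (n + 1) = p (n + 2) + C (g (n + 1)) * p n)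
    (hg0 : g 0 = 0) (hg : ∀ n, momL z (p (n + 1) * p (n + 1)) = g (n + 1) * momL z (p n * p n))
    (n : ℕ) (hn : 1 ≤ n) :
    z * ((p n).eval z * (p n).eval z * Real.exp (-z ^ 4)
        + (p n).eval (-z) * (p n).eval (-z) * Real.exp (-z ^ 4))
      = momL z (p n * p n) * ((2 * (n : ℝ) + 1)
        - 4 * (g n * (g (n + 1) + g n + g (n - 1))
            + g (n + 1) * (g (n + 2) + g (n + 1) + g n))) := by
  obtain ⟨m, rfl⟩ : ∃ m, n = m + 1 := ⟨n - 1, by omega⟩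
  have hX : X * p m = p (m + 1) + C (g m) * p (m - 1) := by
    cases m with
    | zero => rw [h01, hg0]; simp
    | succ k => exact hr k
  have hsq : X * (X * p (m + 1)) = p (m + 3) + C (g (m + 2) + g (m + 1)) * p (m + 1)
      + C (g (m + 1) * g m) * p (m - 1) := by
    rw [hr m, mul_add, hr (m + 1), mul_left_comm, hX]
    simp only [C_add, C_mul]; ring
  have hgg : (g (m + 1) * g m) * momL z (p (m - 1) * p (m - 1)) * (g (m + 1) * g m) =
      (g (m + 1) * g m) * momL z (p (m + 1) * p (m + 1)) := by
    cases m with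
    | zero => rw [hg0]; ring
    | succ k => 
      rw [hg (k + 1), hg k]; simp only [Nat.add_sub_cancel]; ring
  have h4 : momL z (X ^ 4 * (p (m + 1) * p (m + 1))) = momL z (p (m + 1) * p (m + 1)) *
      (g (m + 3) * g (m + 2) + (g (m + 2) + g (m + 1)) ^ 2 + g (m + 1) * g m) := by
    have e : X ^ 4 * (p (m + 1) * p (m + 1)) =
      (X * (X * p (m + 1))) * (X * (X * p (m + 1))) := by ring
    have e2 : ∀ (a b c : Polynomial ℝ) (s t : ℝ), (a + C s * b + C t * c) * (a + C s * b + C t * c)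
      = a * a + C s * (C s * (b * b)) + C t * (C t * (c * c)) + C (2 * s) * (a * b)
        + C (2 * t) * (a * c) + C (2 * s * t) * (b * c) := by
      intro a b c s t
      simp only [C_mul, map_ofNat]; ring
    rw [e, hsq, e2]
    simp only [momL_add, momL_C_mul]
    rw [ho (m + 3) (m + 1) (by omega), ho (m + 3) (m - 1) (by omega),
      ho (m + 1) (m - 1) (by omega), hg (m + 2), hg (m + 1)]
    linear_combination hgg
  have hdm : momL z (p (m + 1) * (X * derivative (p (m + 1)))) =
      ((m : ℝ) + 1) * momL z (p (m + 1) * p (m + 1)) := by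
    rw [orth_eq z p hm hd ho]
    · rw [coeff_X_mul, coeff_derivative]
      have := hm (m + 1)
      rw [Monic, leadingCoeff, hd] at this
      rw [this]; ring
    · refine natDegree_mul_le.trans ?_
      rw [natDegree_X]
      have := natDegree_derivative_le (p (m + 1))
      rw [hd] at this
      omega
  have hi := momL_ibp z (X * (p (m + 1) * p (m + 1)))
  have e3 : derivative (X * (p (m + 1) * p (m + 1))) +
      C (-4) * (X ^ 3 * (X * (p (m + 1) * p (m + 1)))) =
      p (m + 1) * p (m + 1) + C 2 * (p (m + 1) * (X * derivative (p (m + 1))))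
      + C (-4) * (X ^ 4 * (p (m + 1) * p (m + 1))) := by
    simp only [derivative_mul, derivative_X, map_ofNat]; ring
  rw [e3] at hi
  simp only [momL_add, momL_C_mul, h4, hdm, eval_mul, eval_X] at hi
  push_cast
  linear_combination hi

end orth

open Polynomial in
lemma h_hasDerivAt (z : ℝ) (hz : 0 < z)
    (P : ℕ → ℝ → Polynomial ℝ)
    (hm : ∀ z, 0 < z → ∀ n, (P n z).Monic)
    (hd : ∀ z, 0 < z → ∀ n, (P n z).natDegree = n)
    (ho : ∀ z, 0 < z → ∀ m n, m ≠ n → momL z (P m z * P n z) = 0)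
    (hdiffP : ∀ n k, DifferentiableOn ℝ (fun w => (P n w).coeff k) (Set.Ioi (0 : ℝ)))
    (n : ℕ) :
    HasDerivAt (fun w => momL w (P n w * P n w))
      ((P n z).eval z * (P n z).eval z * Real.exp (-z ^ 4)
        + (P n z).eval (-z) * (P n z).eval (-z) * Real.exp (-z ^ 4)) z := by
  have hlead : ∀ w, 0 < w → (P n w).coeff n = 1 := fun w hw => by
    have := hm w hw n
    rwa [Monic, leadingCoeff, hd w hw] at this
  have key : (fun w => momL w (P n w * P n w)) =ᶠ[nhds z]
      fun w => ∑ i ∈ Finset.range (n + 1), (P n w).coeff i * momL w (X ^ i * P n z) := by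
    filter_upwards [lt_mem_nhds hz] with w hw
    have h1 := orth_eq w (fun k => P k w) (hm w hw) (hd w hw) (ho w hw) n (P n z)
      (hd z hz n).le
    rw [hlead z hz, one_mul] at h1
    rw [← h1]
    have h2 := (P n w).as_sum_range_C_mul_X_pow
    rw [hd w hw] at h2
    conv_lhs => rw [h2]
    rw [Finset.sum_mul, momL_sum]
    refine Finset.sum_congr rfl fun i _ => ?_
    rw [mul_assoc, momL_C_mul]
  refine HasDerivAt.congr_of_eventuallyEq ?_ key
  have hc : ∀ i, HasDerivAt (fun w => (P n w).coeff i) (deriv (fun w => (P n w).coeff i) z) z :=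
    fun i => ((hdiffP n i).differentiableAt (Ioi_mem_nhds hz)).hasDerivAt
  have hs := HasDerivAt.fun_sum (u := Finset.range (n + 1)) fun i _ =>
    (hc i).mul (momL_hasDerivAt z (X ^ i * P n z))
  refine hs.congr_deriv ?_
  rw [Finset.sum_add_distrib]
  have z1 : ∑ i ∈ Finset.range (n + 1), deriv (fun w => (P n w).coeff i) z *
      momL z (X ^ i * P n z) = 0 := by
    refine Finset.sum_eq_zero fun i hi => ?_
    rcases (Nat.lt_succ_iff.mp (Finset.mem_range.mp hi)).eq_or_lt with rfl | hi
    · have : (fun w => (P i w).coeff i) =ᶠ[nhds z] fun _ => 1 := by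
        filter_upwards [lt_mem_nhds hz] with w hw using hlead w hw
      rw [this.deriv_eq]; simp
    · rw [mul_comm (X ^ i), orth_lt z (fun k => P k z) (hm z hz) (hd z hz) (ho z hz) n n le_rfl,
        mul_zero]
      rw [degree_X_pow]; exact_mod_cast hi
  rw [z1, zero_add]
  have ev : ∀ x, (P n z).eval x = ∑ i ∈ Finset.range (n + 1), (P n z).coeff i * x ^ i := by
    intro x; rw [eval_eq_sum_range, hd z hz]
  have hz1 := ev z
  have hz2 := ev (-z)
  simp only [eval_mul, eval_pow, eval_X, mul_add, Finset.sum_add_distrib]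
  congr 1
  · conv_rhs => rw [mul_assoc]; arg 1; rw [hz1]
    rw [Finset.sum_mul]
    exact Finset.sum_congr rfl fun i _ => by ring
  · conv_rhs => rw [mul_assoc]; arg 1; rw [hz2]
    rw [Finset.sum_mul]
    exact Finset.sum_congr rfl fun i _ => by ring

/-- Toda-type equations for `h_n(z)` and the recurrence coefficients `γ_n(z)` of
the monic orthogonal polynomials for the weight `e^{-x⁴}` on `[-z, z]`:
`z·h'_n/h_n = (2n+1) - 4[γ_n(γ_{n+1}+γ_n+γ_{n-1}) + γ_{n+1}(γ_{n+2}+γ_{n+1}+γ_n)]`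
and `z·γ'_n/γ_n = 4[γ_{n-1}(γ_n+γ_{n-1}+γ_{n-2}) - γ_{n+1}(γ_{n+2}+γ_{n+1}+γ_n) + 1/2]`. -/
theorem truncated_freud_toda (z : ℝ) (hz : 0 < z)
    (P : ℕ → ℝ → Polynomial ℝ) (γ h : ℕ → ℝ → ℝ)
    (hmonic : ∀ n z, 0 < z → (P n z).Monic)
    (hdeg : ∀ n z, 0 < z → (P n z).natDegree = n)
    (horth : ∀ z, 0 < z → ∀ m n, m ≠ n →
      ∫ x in (-z)..z, (P m z).eval x * (P n z).eval x * Real.exp (-x ^ 4) = 0)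
    (hh : ∀ n z, 0 < z → h n z = ∫ x in (-z)..z, ((P n z).eval x) ^ 2 * Real.exp (-x ^ 4))
    (hhpos : ∀ n z, 0 < z → 0 < h n z)
    (hP0 : ∀ z, 0 < z → P 0 z = 1) (hP1 : ∀ z, 0 < z → P 1 z = Polynomial.X)
    (hrec : ∀ n z, 0 < z →
      Polynomial.X * P (n + 1) z = P (n + 2) z + Polynomial.C (γ (n + 1) z) * P n z)
    (hγ0 : ∀ z, 0 < z → γ 0 z = 0)
    (hγ : ∀ n z, 0 < z → γ (n + 1) z = h (n + 1) z / h n z)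
    (hdiffP : ∀ n k, DifferentiableOn ℝ (fun w => (P n w).coeff k) (Set.Ioi (0 : ℝ)))
    (n : ℕ) (hn : 2 ≤ n) :
    z * deriv (h n) z / h n z =
      (2 * (n : ℝ) + 1)
        - 4 * (γ n z * (γ (n + 1) z + γ n z + γ (n - 1) z)
            + γ (n + 1) z * (γ (n + 2) z + γ (n + 1) z + γ n z))
    ∧ z * deriv (γ n) z / γ n z =
      4 * (γ (n - 1) z * (γ n z + γ (n - 1) z + γ (n - 2) z)
          - γ (n + 1) z * (γ (n + 2) z + γ (n + 1) z + γ n z) + 1 / 2) := by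
  have ho : ∀ z, 0 < z → ∀ m n, m ≠ n → momL z (P m z * P n z) = 0 := by
    intro z hz m n hmn
    have := horth z hz m n hmn
    simpa only [momL, Polynomial.eval_mul] using this
  have hh' : ∀ n z, 0 < z → h n z = momL z (P n z * P n z) := by
    intro n z hz
    rw [hh n z hz]
    simp only [momL, Polynomial.eval_mul, pow_two]
  have hD : ∀ k, 1 ≤ k → ∃ d, HasDerivAt (h k) d z ∧ z * d = h k z * ((2 * (k : ℝ) + 1)
        - 4 * (γ k z * (γ (k + 1) z + γ k z + γ (k - 1) z)
            + γ (k + 1) z * (γ (k + 2) z + γ (k + 1) z + γ k z))) := by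
    intro k hk
    refine ⟨_, (h_hasDerivAt z hz P (fun z hz n => hmonic n z hz) (fun z hz n => hdeg n z hz) ho
      hdiffP k).congr_of_eventuallyEq ?_, ?_⟩
    · filter_upwards [lt_mem_nhds hz] with w hw using hh' k w hw
    · rw [hh' k z hz]
      refine boundary z (fun n => P n z) (fun n => γ n z) (fun n => hmonic n z hz)
        (fun n => hdeg n z hz) (ho z hz) ?_ (fun n => hrec n z hz) (hγ0 z hz) ?_ k hk
      · simp only [hP0 z hz, hP1 z hz, mul_one]
      · intro j
        rw [← hh' _ z hz, ← hh' _ z hz, hγ j z hz, div_mul_cancel₀ _ (hhpos j z hz).ne']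
  obtain ⟨d, hd, hde⟩ := hD n (by omega)
  obtain ⟨m, rfl⟩ : ∃ m, n = m + 2 := ⟨n - 2, by omega⟩
  obtain ⟨d', hd', hde'⟩ := hD (m + 1) (by omega)
  have p1 := (hhpos (m + 2) z hz).ne'
  have p2 := (hhpos (m + 1) z hz).ne'
  constructor
  · rw [hd.deriv, hde, mul_div_cancel_left₀ _ p1]
  · have e : γ (m + 2) =ᶠ[nhds z] fun w => h (m + 2) w / h (m + 1) w := by
      filter_upwards [lt_mem_nhds hz] with w hw using hγ (m + 1) w hw
    rw [e.deriv_eq, (hd.fun_div hd' p2).deriv]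
    have e2 : z * ((d * h (m + 1) z - h (m + 2) z * d') / h (m + 1) z ^ 2) / γ (m + 2) z
        = z * d / h (m + 2) z - z * d' / h (m + 1) z := by
      rw [hγ (m + 1) z hz]
      field_simp
    rw [e2, hde, hde', mul_div_cancel_left₀ _ p1, mul_div_cancel_left₀ _ p2]
    have i1 : m + 2 - 1 = m + 1 := rfl
    have i2 : m + 2 - 2 = m := rfl
    have i3 : m + 1 - 1 = m := rfl
    have i4 : m + 1 + 1 = m + 2 := rfl
    have i5 : m + 1 + 2 = m + 2 + 1 := rfl
    simp only [i1, i2, i3, i4, i5]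
    push_cast
    ring
end
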